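/- The set Prim(ℬ) = {x ∈ ℬ : Δ(x) = x ⊗ ε + ε ⊗ x} of primitive elements of ℬ is a Lie subalgebra of ℬ for the bracket [x, y] = x ⋆ y − y ⋆ x, and as a Lie algebra over ℂ it is isomorphic to the free Lie algebra on the set 𝔾 of nonempty indivisible B-diagrams. -/

import Mathlib

open scoped BigOperators

structure BD where
  lam : List ℕ
  up : Finset ℕ
  dn : Finset ℕ
  ed : Finset (ℕ × ℕ)
deriving DecidableEq

namespace BD

/-- number of vertices -/
def nv (G : BD) : ℕ := G.lam.length

/-- number of half-edges -/
def omega (G : BD) : ℕ := G.lam.sum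

/-- the vertex to which a half-edge belongs -/
def v (G : BD) (k : ℕ) : ℕ :=
  (List.range G.lam.length).countP (fun i => (G.lam.take i).sum < k)

def Valid (G : BD) : Prop :=
  (∀ x ∈ G.lam, 0 < x) ∧
  G.up ⊆ Finset.Icc 1 G.omega ∧
  G.dn ⊆ Finset.Icc 1 G.omega ∧
  (∀ p ∈ G.ed, p.1 ∈ G.up ∧ p.2 ∈ G.dn ∧ G.v p.1 < G.v p.2) ∧
  (∀ p ∈ G.ed, ∀ q ∈ G.ed, p.1 = q.1 → p = q) ∧
  (∀ p ∈ G.ed, ∀ q ∈ G.ed, p.2 = q.2 → p = q)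

def eps : BD := ⟨[], ∅, ∅, ∅⟩

theorem eps_valid : eps.Valid := by
  refine ⟨?_, ?_, ?_, ?_, ?_, ?_⟩ <;> simp [eps, Valid, omega]

def HfUp (G : BD) : Finset ℕ := G.up \ G.ed.image Prod.fst
def HfDn (G : BD) : Finset ℕ := G.dn \ G.ed.image Prod.snd
def hfUp (G : BD) : ℕ := G.HfUp.card
def hfDn (G : BD) : ℕ := G.HfDn.card
def hc (G : BD) : ℕ :=
  (G.omega - G.ed.card - G.hfUp) + (G.omega - G.ed.card - G.hfDn)

/-- composition of `G'` over `G` along a matching `s` -/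
def comp (G G' : BD) (s : Finset (ℕ × ℕ)) : BD where
  lam := G.lam ++ G'.lam
  up := G.up ∪ G'.up.image (· + G.omega)
  dn := G.dn ∪ G'.dn.image (· + G.omega)
  ed := G.ed ∪ s.image (fun p => (p.1, p.2 + G.omega)) ∪
        G'.ed.image (fun p => (p.1 + G.omega, p.2 + G.omega))

/-- `s` encodes a strictly increasing sequence `a₁ < ⋯ < a_k` of elements of `H_f↑(G)`
matched with pairwise distinct elements `b₁,…,b_k` of `H_f↓(G')`. -/
def Matching (G G' : BD) (s : Finset (ℕ × ℕ)) : Prop :=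
  (∀ p ∈ s, p.1 ∈ G.HfUp ∧ p.2 ∈ G'.HfDn) ∧
  (∀ p ∈ s, ∀ q ∈ s, p.1 = q.1 → p = q) ∧
  (∀ p ∈ s, ∀ q ∈ s, p.2 = q.2 → p = q)

open scoped Classical in
noncomputable def matchings (G G' : BD) : Finset (Finset (ℕ × ℕ)) :=
  (G.HfUp ×ˢ G'.HfDn).powerset.filter (fun s => Matching G G' s)

/-- juxtaposition -/
def juxt (G G' : BD) : BD := comp G G' ∅

def Indiv (G : BD) : Prop :=
  ∀ G₁ G₂ : BD, G₁.Valid → G₂.Valid → G = juxt G₁ G₂ → G₁ = G ∨ G₂ = G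

/-- half-edges attached to the vertices in `I` -/
def HI (G : BD) (I : Finset ℕ) : Finset ℕ :=
  (Finset.Icc 1 G.omega).filter (fun k => G.v k ∈ I)

/-- the increasing relabelling bijection -/
def phi (G : BD) (I : Finset ℕ) (k : ℕ) : ℕ := ((G.HI I).filter (· ≤ k)).card

/-- sub-B-diagram on the set of vertices `I` -/
def sub (G : BD) (I : Finset ℕ) : BD where
  lam := ((List.range G.lam.length).filter (fun i => i + 1 ∈ I)).map (fun i => G.lam.getD i 0)
  up := (G.up ∩ G.HI I).image (G.phi I)
  dn := (G.dn ∩ G.HI I).image (G.phi I)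
  ed := (G.ed.filter (fun p => G.v p.1 ∈ I ∧ G.v p.2 ∈ I)).image
          (fun p => (G.phi I p.1, G.phi I p.2))

def Isolated (G : BD) (I : Finset ℕ) : Prop :=
  ∀ p ∈ G.ed, (G.v p.1 ∈ I ↔ G.v p.2 ∈ I)

def Connected (G : BD) : Prop :=
  ∀ i j : ℕ, 1 ≤ i → i < j → j ≤ G.nv →
    ∃ (k : ℕ) (c : Fin (k + 1) → ℕ × ℕ),
      (∀ ℓ, c ℓ ∈ G.ed) ∧
      (i = G.v (c 0).1 ∨ i = G.v (c 0).2) ∧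
      (j = G.v (c (Fin.last k)).1 ∨ j = G.v (c (Fin.last k)).2) ∧
      ∀ ℓ : Fin k,
        G.v (c ℓ.castSucc).1 = G.v (c ℓ.succ).1 ∨ G.v (c ℓ.castSucc).1 = G.v (c ℓ.succ).2 ∨
        G.v (c ℓ.castSucc).2 = G.v (c ℓ.succ).1 ∨ G.v (c ℓ.castSucc).2 = G.v (c ℓ.succ).2

def IsConnComp (G : BD) (I : Finset ℕ) : Prop :=
  I ⊆ Finset.Icc 1 G.nv ∧ I.Nonempty ∧ (G.sub I).Connected ∧
  ∀ J : Finset ℕ, I ⊆ J → J ⊆ Finset.Icc 1 G.nv → (G.sub J).Connected → J = I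

end BD

open scoped TensorProduct

/-- B-diagrams -/
abbrev BDiagram := {G : BD // G.Valid}

/-- the free `ℂ`-vector space on the set of B-diagrams -/
abbrev BSpace := BDiagram →₀ ℂ

open scoped Classical in
noncomputable def mkB (G : BD) : BSpace :=
  if h : G.Valid then Finsupp.single ⟨G, h⟩ 1 else 0

noncomputable def unitB : BSpace := Finsupp.single ⟨BD.eps, BD.eps_valid⟩ 1

noncomputable def liftB {V : Type*} [AddCommMonoid V] [Module ℂ V] (f : BDiagram → V) :
    BSpace →ₗ[ℂ] V :=
  Finsupp.lsum ℂ fun A => LinearMap.toSpanSingleton ℂ V (f A)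

noncomputable def mulfun (A B : BDiagram) : BSpace :=
  ∑ s ∈ BD.matchings A.1 B.1, mkB (BD.comp A.1 B.1 s)

/-- the product ⋆ of the algebra of B-diagrams, as a bilinear map -/
noncomputable def starB : BSpace →ₗ[ℂ] BSpace →ₗ[ℂ] BSpace :=
  liftB fun A => liftB fun B => mulfun A B

open scoped Classical in
/-- the coproduct evaluated on a B-diagram -/
noncomputable def dfun (A : BDiagram) : BSpace ⊗[ℂ] BSpace :=
  ∑ I ∈ (Finset.Icc 1 A.1.nv).powerset.filter (fun I => A.1.Isolated I),
    mkB (A.1.sub I) ⊗ₜ[ℂ] mkB (A.1.sub (Finset.Icc 1 A.1.nv \ I))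

/-- the coproduct Δ of ℬ -/
noncomputable def deltaL : BSpace →ₗ[ℂ] BSpace ⊗[ℂ] BSpace := liftB dfun

/-- the counit of ℬ -/
noncomputable def counitB : BSpace →ₗ[ℂ] ℂ :=
  liftB fun A => if A.1 = BD.eps then (1 : ℂ) else 0

/-- the set 𝔾 of nonempty indivisible B-diagrams -/
abbrev GSet := {A : BDiagram // A.1 ≠ BD.eps ∧ A.1.Indiv}

/-- the set of primitive elements of ℬ -/
noncomputable def PrimB : Set BSpace :=
  {x : BSpace | deltaL x = x ⊗ₜ[ℂ] unitB + unitB ⊗ₜ[ℂ] x}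

section FreeLiePart

attribute [local instance 100] LieRing.ofAssociativeRing

namespace FLA

variable (X : Type*)

local notation "LL" => FreeLieAlgebra ℂ X
local notation "TT" => FreeAlgebra ℂ X

noncomputable def adT : TT →ₐ[ℂ] Module.End ℂ LL :=
  FreeAlgebra.lift ℂ fun x => LieAlgebra.ad ℂ LL (FreeLieAlgebra.of ℂ x)

noncomputable def iota : LL →ₗ⁅ℂ⁆ TT := FreeLieAlgebra.lift ℂ (FreeAlgebra.ι ℂ)

noncomputable def eps : TT →ₐ[ℂ] ℂ := FreeAlgebra.lift ℂ fun _ => 0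

noncomputable def gen (x : X) : Module.End ℂ (LL × ℂ) :=
  LinearMap.prod
    ((LieAlgebra.ad ℂ LL (FreeLieAlgebra.of ℂ x)).comp (LinearMap.fst ℂ LL ℂ) +
      (LinearMap.toSpanSingleton ℂ LL (FreeLieAlgebra.of ℂ x)).comp (LinearMap.snd ℂ LL ℂ)) 0

noncomputable def rho : TT →ₐ[ℂ] Module.End ℂ (LL × ℂ) := FreeAlgebra.lift ℂ (gen X)

noncomputable def D : TT →ₗ[ℂ] LL :=
  (LinearMap.fst ℂ LL ℂ).comp ((LinearMap.applyₗ ((0 : LL), (1 : ℂ))).comp (rho X).toLinearMap)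

theorem D_apply (a : TT) : D X a = (rho X a (0, 1)).1 := rfl

theorem rho_apply (a : TT) : ∀ (l : LL) (c : ℂ),
    rho X a (l, c) = (adT X a l + c • D X a, eps X a * c) := by
  induction a with
  | grade0 r => intro l c; simp [D_apply, Algebra.algebraMap_eq_smul_one]
  | grade1 x => intro l c; simp [D_apply, rho, adT, eps, gen]
  | mul a b ha hb =>
    intro l c
    have hD : D X (a * b) = adT X a (D X b) + eps X b • D X a := by
      rw [D_apply, map_mul, Module.End.mul_apply, hb, ha]; simp
    rw [map_mul, Module.End.mul_apply, hb, ha, hD]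
    ext
    · simp only [map_mul, Module.End.mul_apply, map_add, map_smul, smul_add, smul_smul]
      rw [mul_comm (eps X b) c]; abel
    · simp; ring
  | add a b ha hb =>
    intro l c
    rw [map_add, LinearMap.add_apply, ha, hb]
    ext
    · simp; abel
    · simp; ring

theorem D_mul (a b : TT) : D X (a * b) = adT X a (D X b) + eps X b • D X a := by
  rw [D_apply, map_mul, Module.End.mul_apply, rho_apply X b, rho_apply X a]; simp

theorem D_iota (x : X) : D X (FreeAlgebra.ι ℂ x) = FreeLieAlgebra.of ℂ x := by
  simp [D_apply, rho, gen]

theorem D_one : D X 1 = 0 := by simp [D_apply]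

theorem ad_iota (l : LL) : adT X (iota X l) = LieAlgebra.ad ℂ LL l := by
  have : ((adT X : TT →ₗ⁅ℂ⁆ Module.End ℂ LL).comp (iota X)) = LieAlgebra.ad ℂ LL := by
    ext x
    simp [adT, iota]
  exact congrArg (fun f => f l) this

theorem eps_iota (l : LL) : eps X (iota X l) = 0 := by
  have : ((eps X : TT →ₗ⁅ℂ⁆ ℂ).comp (iota X)) = 0 := by
    ext x
    simp [eps, iota]
  exact congrArg (fun f => f l) this

theorem lie_top (K : LieSubalgebra ℂ LL) (h : ∀ x, FreeLieAlgebra.of ℂ x ∈ K) (l : LL) : l ∈ K := by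
  let F : LL →ₗ⁅ℂ⁆ K := FreeLieAlgebra.lift ℂ fun x => ⟨_, h x⟩
  have : K.incl.comp F = LieHom.id := by ext x; simp [F]
  have h2 := congrArg (fun f => f l) this
  simp at h2
  rw [← h2]; exact (F l).2

noncomputable def EL : Module.End ℂ LL := (D X).comp (iota X : LL →ₗ[ℂ] TT)

theorem EL_apply (l : LL) : EL X l = D X (iota X l) := rfl

theorem EL_lie (l m : LL) : EL X ⁅l, m⁆ = ⁅l, EL X m⁆ + ⁅EL X l, m⁆ := by
  rw [EL_apply, LieHom.map_lie, LieRing.of_associative_ring_bracket, map_sub, D_mul, D_mul,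
    ad_iota, ad_iota, eps_iota, eps_iota, EL_apply, EL_apply]
  simp only [zero_smul, add_zero, LieAlgebra.ad_apply]
  rw [← lie_skew (D X (iota X l)) m, sub_eq_add_neg]

def posEig {V : Type*} [AddCommGroup V] [Module ℂ V] (E : Module.End ℂ V) : Submodule ℂ V :=
  ⨆ n : ℕ, E.eigenspace ((n : ℂ) + 1)

theorem posEig_zero {V : Type*} [AddCommGroup V] [Module ℂ V] (E : Module.End ℂ V) (x : V)
    (hx : x ∈ posEig E) (h0 : E x = 0) : x = 0 := by
  have h := Module.End.eigenspaces_iSupIndep E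
  have hd := h 0
  refine Submodule.disjoint_def.1 hd x ?_ ?_
  · simp [h0]
  · refine (iSup_le fun n => ?_ : posEig E ≤ _) hx
    have hn : ((n : ℂ) + 1) ≠ 0 := by exact_mod_cast Nat.succ_ne_zero n
    exact le_iSup₂_of_le _ hn le_rfl

theorem EL_pos (l : LL) : l ∈ posEig (EL X) := by
  refine lie_top X { posEig (EL X) with lie_mem' := ?_ } ?_ l
  · intro x y hx hy
    change x ∈ posEig (EL X) at hx
    change y ∈ posEig (EL X) at hy
    change ⁅x, y⁆ ∈ posEig (EL X)
    unfold posEig at hx hy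
    induction hx using Submodule.iSup_induction' with
    | mem n x hx =>
      induction hy using Submodule.iSup_induction' with
      | mem m y hy =>
        refine Submodule.mem_iSup_of_mem (n + m + 1) ?_
        rw [Module.End.mem_eigenspace_iff] at *
        rw [EL_lie, hx, hy, lie_smul, smul_lie, ← add_smul]
        congr 1; push_cast; ring
      | zero => simp
      | add y z _ _ hy hz => rw [lie_add]; exact add_mem hy hz
    | zero => simp
    | add y z _ _ hy hz => rw [add_lie]; exact add_mem hy hz
  · intro x
    refine Submodule.mem_iSup_of_mem 0 ?_
    rw [Module.End.mem_eigenspace_iff, EL_apply]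
    simp [iota, D_iota]

theorem iota_injective : Function.Injective (iota X) := by
  rw [injective_iff_map_eq_zero]
  intro l hl
  exact posEig_zero _ l (EL_pos X l) (by rw [EL_apply, hl, map_zero])

noncomputable def del : TT →ₐ[ℂ] TT ⊗[ℂ] TT :=
  FreeAlgebra.lift ℂ fun x => FreeAlgebra.ι ℂ x ⊗ₜ 1 + 1 ⊗ₜ FreeAlgebra.ι ℂ x

theorem del_iota_mem (l : LL) : del X (iota X l) = iota X l ⊗ₜ 1 + 1 ⊗ₜ iota X l := by
  let K : LieSubalgebra ℂ LL :=
    { carrier := {l | del X (iota X l) = iota X l ⊗ₜ 1 + 1 ⊗ₜ iota X l}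
      add_mem' := by
        intro a b ha hb
        simp only [Set.mem_ofPred_eq] at *
        rw [map_add, map_add, ha, hb, TensorProduct.add_tmul, TensorProduct.tmul_add]; abel
      zero_mem' := by simp
      smul_mem' := by
        intro c a ha
        simp only [Set.mem_ofPred_eq] at *
        rw [map_smul, map_smul, ha, smul_add, TensorProduct.smul_tmul', TensorProduct.tmul_smul]
      lie_mem' := by
        intro a b ha hb
        simp only [Set.mem_ofPred_eq] at *
        rw [LieHom.map_lie, LieRing.of_associative_ring_bracket, map_sub, map_mul, map_mul, ha, hb]
        simp only [mul_add, add_mul, Algebra.TensorProduct.tmul_mul_tmul, one_mul, mul_one,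
          TensorProduct.sub_tmul, TensorProduct.tmul_sub]
        abel }
  refine lie_top X K ?_ l
  intro x
  change del X (iota X _) = _
  simp [iota, del]

noncomputable def ET0 : TT ⊗[ℂ] TT →ₗ[ℂ] TT :=
  (LinearMap.mul' ℂ TT).comp
    (TensorProduct.map ((iota X : LL →ₗ[ℂ] TT).comp (D X)) LinearMap.id)

noncomputable def ET : Module.End ℂ TT := (ET0 X).comp (del X).toLinearMap

noncomputable def epsid : TT ⊗[ℂ] TT →ₐ[ℂ] TT :=
  Algebra.TensorProduct.lift ((Algebra.ofId ℂ TT).comp (eps X)) (AlgHom.id ℂ TT)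
    (fun a b => Algebra.commutes (eps X a) b)

theorem epsid_tmul (a b : TT) : epsid X (a ⊗ₜ b) = eps X a • b := by
  rw [Algebra.smul_def]
  exact Algebra.TensorProduct.lift_tmul _ _ _ a b

theorem epsid_del (w : TT) : epsid X (del X w) = w := by
  have : (epsid X).comp (del X) = AlgHom.id ℂ TT := by
    ext x
    simp [epsid_tmul, del, eps]
  exact congrArg (fun f => f w) this

theorem ET0_mul (x : X) (t : TT ⊗[ℂ] TT) :
    ET0 X ((FreeAlgebra.ι ℂ x ⊗ₜ 1 + 1 ⊗ₜ FreeAlgebra.ι ℂ x) * t) =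
      FreeAlgebra.ι ℂ x * ET0 X t + FreeAlgebra.ι ℂ x * epsid X t := by
  induction t with
  | zero => simp
  | add a b ha hb => rw [mul_add, map_add, ha, hb, map_add, map_add, mul_add, mul_add]; abel
  | tmul a b =>
    have h1 : iota X (FreeLieAlgebra.of ℂ x) = FreeAlgebra.ι ℂ x := by simp [iota]
    have h2 : adT X (FreeAlgebra.ι ℂ x) (D X a) = ⁅FreeLieAlgebra.of ℂ x, D X a⁆ := by
      simp [adT]
    simp only [add_mul, Algebra.TensorProduct.tmul_mul_tmul, one_mul, map_add]
    simp only [ET0, LinearMap.comp_apply, TensorProduct.map_tmul, LinearMap.mul'_apply,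
      LinearMap.id_apply, D_mul, h2, D_iota, map_add, map_smul, LieHom.coe_toLinearMap,
      LieHom.map_lie, h1, LieRing.of_associative_ring_bracket, epsid_tmul]
    simp only [add_mul, sub_mul, smul_mul_assoc, mul_smul_comm,
      mul_assoc]
    abel

theorem ET_mul (x : X) (w : TT) :
    ET X (FreeAlgebra.ι ℂ x * w) = FreeAlgebra.ι ℂ x * ET X w + FreeAlgebra.ι ℂ x * w := by
  change ET0 X (del X _) = _ * ET0 X (del X _) + _
  rw [map_mul]
  have : del X (FreeAlgebra.ι ℂ x) = FreeAlgebra.ι ℂ x ⊗ₜ 1 + 1 ⊗ₜ FreeAlgebra.ι ℂ x := by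
    simp [del]
  rw [this, ET0_mul, epsid_del]

theorem ET_one : ET X 1 = 0 := by
  change ET0 X (del X 1) = 0
  rw [map_one, Algebra.TensorProduct.one_def]
  simp [ET0, D_one]

theorem ET_prim (w : TT) (h : del X w = w ⊗ₜ 1 + 1 ⊗ₜ w) : ET X w = iota X (D X w) := by
  change ET0 X (del X w) = _
  rw [h]
  simp [ET0, D_one]

theorem T_decomp (w : TT) : w ∈ Submodule.span ℂ {(1 : TT)} ⊔ posEig (ET X) := by
  have key : ∀ a : TT, ∀ w ∈ Submodule.span ℂ {(1 : TT)} ⊔ posEig (ET X),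
      a * w ∈ Submodule.span ℂ {(1 : TT)} ⊔ posEig (ET X) := by
    intro a
    induction a with
    | grade0 r => intro w hw; rw [← Algebra.smul_def]; exact Submodule.smul_mem _ _ hw
    | grade1 x =>
      intro w hw
      obtain ⟨y, hy, z, hz, rfl⟩ := Submodule.mem_sup.1 hw
      obtain ⟨c, rfl⟩ := Submodule.mem_span_singleton.1 hy
      refine Submodule.mem_sup_right ?_
      rw [mul_add]
      refine add_mem ?_ ?_
      · rw [mul_smul_comm, mul_one]
        refine Submodule.smul_mem _ _ (Submodule.mem_iSup_of_mem 0 ?_)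
        rw [Module.End.mem_eigenspace_iff]
        have := ET_mul X x 1
        rw [mul_one, ET_one] at this
        simpa using this
      · unfold posEig at hz
        induction hz using Submodule.iSup_induction' with
        | mem n x hx =>
          refine Submodule.mem_iSup_of_mem (n + 1) ?_
          rw [Module.End.mem_eigenspace_iff] at *
          rw [ET_mul, hx, mul_smul_comm]
          push_cast
          module
        | zero => simp
        | add y z hy' hz' hy hz =>
          rw [mul_add]
          refine add_mem (hy ?_) (hz ?_)
          · exact Submodule.add_mem _ (Submodule.mem_sup_left ‹_›) (Submodule.mem_sup_right hy')
          · exact Submodule.add_mem _ (Submodule.mem_sup_left ‹_›) (Submodule.mem_sup_right hz')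
    | mul a b ha hb => intro w hw; rw [mul_assoc]; exact ha _ (hb _ hw)
    | add a b ha hb => intro w hw; rw [add_mul]; exact add_mem (ha _ hw) (hb _ hw)
  have := key w 1 (Submodule.mem_sup_left (Submodule.mem_span_singleton_self 1))
  rwa [mul_one] at this

theorem prim_range (w : TT) (h : del X w = w ⊗ₜ 1 + 1 ⊗ₜ w) : ∃ l, iota X l = w := by
  let R : Submodule ℂ TT := LinearMap.range (iota X : LL →ₗ[ℂ] TT)
  have hR : R ≤ R.comap (ET X) := by
    rintro _ ⟨l, rfl⟩
    exact ⟨D X (iota X l), (ET_prim X _ (del_iota_mem X l)).symm⟩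
  let Eb : Module.End ℂ (TT ⧸ R) := R.mapQ R (ET X) hR
  obtain ⟨y, hy, z, hz, hyz⟩ := Submodule.mem_sup.1 (T_decomp X w)
  obtain ⟨c, rfl⟩ := Submodule.mem_span_singleton.1 hy
  have hz2 : R.mkQ z ∈ posEig Eb := by
    clear hyz
    unfold posEig at hz
    induction hz using Submodule.iSup_induction' with
    | mem n x hx =>
      refine Submodule.mem_iSup_of_mem n ?_
      rw [Module.End.mem_eigenspace_iff] at *
      simp only [Eb, Submodule.mkQ_apply, Submodule.mapQ_apply, hx]
      rfl
    | zero => rw [map_zero]; exact zero_mem _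
    | add y z hy' hz' hy hz => rw [map_add]; exact add_mem hy hz
  have hz3 : R.mkQ z = 0 := by
    refine posEig_zero Eb _ hz2 ?_
    change R.mkQ (ET X z) = 0
    have h1 : ET X w = ET X z := by
      rw [← hyz, map_add, map_smul, ET_one, smul_zero, zero_add]
    rw [← h1, ET_prim X w h, Submodule.mkQ_apply, Submodule.Quotient.mk_eq_zero]
    exact ⟨_, rfl⟩
  rw [Submodule.mkQ_apply, Submodule.Quotient.mk_eq_zero] at hz3
  obtain ⟨l, hl⟩ := hz3
  change iota X l = z at hl
  have hc : c = 0 := by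
    rw [← hyz, ← hl, map_add, del_iota_mem, map_smul, map_one, Algebra.TensorProduct.one_def,
      TensorProduct.add_tmul, TensorProduct.tmul_add] at h
    have h2 := congrArg (fun t => eps X (epsid X t)) h
    simp only [map_add, map_smul, epsid_tmul, eps_iota, map_one, zero_smul, map_zero, one_smul,
      smul_eq_mul, mul_one, add_zero] at h2
    simpa using h2
  exact ⟨l, by rw [hl, ← hyz, hc, zero_smul, zero_add]⟩

end FLA

end FreeLiePart

namespace BD

def pre (G : BD) (i : ℕ) : ℕ := (G.lam.take i).sum

theorem pre_mono (G : BD) : Monotone G.pre := by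
  intro i j h
  exact (List.take_sublist_take_left h).sum_le_sum (by simp)

theorem pre_zero (G : BD) : G.pre 0 = 0 := by simp [pre]

theorem pre_of_le (G : BD) {i : ℕ} (h : G.nv ≤ i) : G.pre i = G.omega := by
  unfold pre omega
  rw [List.take_of_length_le h]

theorem pre_le (G : BD) (i : ℕ) : G.pre i ≤ G.omega :=
  (List.take_sublist _ _).sum_le_sum (by simp)

theorem countP_aux (p : ℕ → Bool) (hp : ∀ i j, i ≤ j → p j = true → p i = true) (n i : ℕ) :
    i < (List.range n).countP p ↔ i < n ∧ p i = true := by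
  induction n with
  | zero => simp
  | succ n ih =>
    rw [List.range_succ, List.countP_append]
    by_cases h : p n = true
    · have : (List.range n).countP p = n := by
        have : (List.range n).countP p = (List.range n).length := by
          rw [List.countP_eq_length]
          intro a ha
          exact hp a n (le_of_lt (List.mem_range.1 ha)) h
        simpa using this
      simp only [List.countP_singleton, h, this, if_true]
      constructor
      · intro hi; exact ⟨hi, hp i n (by omega) h⟩
      · exact fun h => h.1
    · simp only [List.countP_singleton, h]
      simp only [Bool.false_eq_true, if_false, add_zero, ih]
      constructor
      · rintro ⟨a, b⟩; exact ⟨by omega, b⟩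
      · rintro ⟨a, b⟩
        refine ⟨?_, b⟩
        rcases Nat.lt_succ_iff_lt_or_eq.1 a with h' | h'
        · exact h'
        · exact absurd (h' ▸ b) h

theorem lt_v (G : BD) (i k : ℕ) : i < G.v k ↔ i < G.nv ∧ G.pre i < k := by
  unfold v
  rw [countP_aux]
  · simp [nv, pre]
  · intro i j h hj
    simp only [decide_eq_true_eq] at *
    exact lt_of_le_of_lt (G.pre_mono h) hj

theorem v_le (G : BD) {k : ℕ} (hk : k ≤ G.omega) (i : ℕ) : G.v k ≤ i ↔ k ≤ G.pre i := by
  rw [← not_lt, lt_v, not_and_or, not_lt, not_lt]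
  constructor
  · rintro (h | h)
    · rw [pre_of_le G h]; exact hk
    · exact h
  · exact Or.inr

theorem v_mono (G : BD) : Monotone G.v := by
  intro a b h
  by_contra hc
  push Not at hc
  have := (G.lt_v _ _).1 hc
  exact lt_irrefl (G.v b) ((G.lt_v _ _).2 ⟨this.1, lt_of_lt_of_le this.2 h⟩)

theorem v_le_nv (G : BD) (k : ℕ) : G.v k ≤ G.nv := by
  by_contra hc
  push Not at hc
  exact lt_irrefl _ ((G.lt_v _ _).1 hc).1

theorem v_pos (G : BD) {k : ℕ} (h : 1 ≤ k) (h2 : k ≤ G.omega) : 1 ≤ G.v k := by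
  by_contra hc
  have : G.v k ≤ 0 := by omega
  rw [v_le G h2, pre_zero] at this
  omega

theorem v_mem (G : BD) {k : ℕ} (h : k ∈ Finset.Icc 1 G.omega) : G.v k ∈ Finset.Icc 1 G.nv := by
  rw [Finset.mem_Icc] at *
  exact ⟨G.v_pos h.1 h.2, G.v_le_nv k⟩

theorem lam_eq (D D' : BD) (hn : D.nv = D'.nv) (hw : D.omega = D'.omega)
    (hv : ∀ k ∈ Finset.Icc 1 D.omega, D.v k = D'.v k) : D.lam = D'.lam := by
  have hp : ∀ i, D.pre i = D'.pre i := by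
    intro i
    have key : ∀ k ≤ D.omega, (k ≤ D.pre i ↔ k ≤ D'.pre i) := by
      intro k hk
      rcases Nat.eq_zero_or_pos k with rfl | h0
      · simp
      · rw [← v_le D hk, ← v_le D' (hw ▸ hk), hv k (Finset.mem_Icc.2 ⟨h0, hk⟩)]
    exact le_antisymm ((key _ (D.pre_le i)).1 le_rfl) ((key _ (hw ▸ D'.pre_le i)).2 le_rfl)
  refine List.ext_getElem hn ?_
  intro i h1 h2
  have a1 := hp (i + 1)
  have a0 := hp i
  unfold pre at a0 a1
  rw [List.sum_take_succ _ _ h1, List.sum_take_succ _ _ h2] at a1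
  omega

/-- rank in a finite set -/
def rk (S : Finset ℕ) (a : ℕ) : ℕ := (S.filter (· ≤ a)).card

theorem rk_mono (S : Finset ℕ) : StrictMonoOn (rk S) S := by
  intro a ha b hb h
  apply Finset.card_lt_card
  rw [Finset.ssubset_iff_of_subset]
  · exact ⟨b, by simpa using hb, by simp; intro _; exact h⟩
  · intro x; simp; intro h1 h2; exact ⟨h1, by omega⟩

theorem rk_img (S : Finset ℕ) : S.image (rk S) = Finset.Icc 1 S.card := by
  apply Finset.eq_of_subset_of_card_le
  · intro x hx
    obtain ⟨a, ha, rfl⟩ := Finset.mem_image.1 hx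
    rw [Finset.mem_Icc]
    refine ⟨Finset.card_pos.2 ⟨a, by simp [ha]⟩, Finset.card_le_card (Finset.filter_subset _ _)⟩
  · rw [Finset.card_image_of_injOn (rk_mono S).injOn]; simp

theorem rk_uniq (S : Finset ℕ) (f : ℕ → ℕ) (hf : StrictMonoOn f S) (m : ℕ)
    (hi : S.image f = Finset.Icc 1 m) (a : ℕ) (ha : a ∈ S) : f a = rk S a := by
  unfold rk
  have h1 : (S.filter (· ≤ a)).image f = Finset.Icc 1 (f a) := by
    ext x
    simp only [Finset.mem_image, Finset.mem_filter, Finset.mem_Icc]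
    constructor
    · rintro ⟨b, ⟨hb, hba⟩, rfl⟩
      have : f b ∈ Finset.Icc 1 m := hi ▸ Finset.mem_image_of_mem f hb
      exact ⟨(Finset.mem_Icc.1 this).1, (hf.le_iff_le hb ha).2 hba⟩
    · rintro ⟨h1, h2⟩
      have h3 : f a ∈ Finset.Icc 1 m := hi ▸ Finset.mem_image_of_mem f ha
      have : x ∈ S.image f := by
        rw [hi, Finset.mem_Icc]; exact ⟨h1, h2.trans (Finset.mem_Icc.1 h3).2⟩
      obtain ⟨b, hb, rfl⟩ := Finset.mem_image.1 this
      exact ⟨b, ⟨hb, (hf.le_iff_le hb ha).1 h2⟩, rfl⟩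
  rw [← Finset.card_image_of_injOn (hf.injOn.mono (by exact_mod_cast Finset.filter_subset _ _)), h1]; simp

theorem rk_card (S : Finset ℕ) (f : ℕ → ℕ) (hf : StrictMonoOn f S) (m : ℕ)
    (hi : S.image f = Finset.Icc 1 m) : m = S.card := by
  rw [← Finset.card_image_of_injOn hf.injOn, hi]; simp

theorem mem_HI (G : BD) (I : Finset ℕ) (k : ℕ) :
    k ∈ G.HI I ↔ (1 ≤ k ∧ k ≤ G.omega) ∧ G.v k ∈ I := by simp [HI]

/-- `D` is the restriction of `G` to `I`, through relabellings `φ`, `ψ` -/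
structure Rel (G : BD) (I : Finset ℕ) (D : BD) (φ ψ : ℕ → ℕ) : Prop where
  sub : I ⊆ Finset.Icc 1 G.nv
  pmono : StrictMonoOn ψ I
  pimg : I.image ψ = Finset.Icc 1 D.nv
  fmono : StrictMonoOn φ (G.HI I)
  fimg : (G.HI I).image φ = Finset.Icc 1 D.omega
  hv : ∀ a ∈ G.HI I, D.v (φ a) = ψ (G.v a)
  hup : D.up = (G.up ∩ G.HI I).image φ
  hdn : D.dn = (G.dn ∩ G.HI I).image φ
  hed : D.ed = (G.ed.filter (fun p => G.v p.1 ∈ I ∧ G.v p.2 ∈ I)).image (fun p => (φ p.1, φ p.2))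

theorem Valid.ed_mem {G : BD} (hG : G.Valid) {p : ℕ × ℕ} (hp : p ∈ G.ed) :
    p.1 ∈ Finset.Icc 1 G.omega ∧ p.2 ∈ Finset.Icc 1 G.omega :=
  ⟨hG.2.1 (hG.2.2.2.1 p hp).1, hG.2.2.1 (hG.2.2.2.1 p hp).2.1⟩

theorem Valid.ed_HI {G : BD} (hG : G.Valid) {p : ℕ × ℕ} (hp : p ∈ G.ed) (I : Finset ℕ) :
    (p.1 ∈ G.HI I ↔ G.v p.1 ∈ I) ∧ (p.2 ∈ G.HI I ↔ G.v p.2 ∈ I) := by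
  have := hG.ed_mem hp
  rw [Finset.mem_Icc, Finset.mem_Icc] at this
  rw [mem_HI, mem_HI]
  exact ⟨⟨fun h => h.2, fun h => ⟨this.1, h⟩⟩, ⟨fun h => h.2, fun h => ⟨this.2, h⟩⟩⟩

theorem Rel.uniq {G : BD} (hG : G.Valid) {I : Finset ℕ} {D D' : BD} {φ ψ φ' ψ' : ℕ → ℕ}
    (h : Rel G I D φ ψ) (h' : Rel G I D' φ' ψ') : D = D' := by
  have hn : D.nv = D'.nv := by rw [rk_card _ _ h.pmono _ h.pimg, rk_card _ _ h'.pmono _ h'.pimg]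
  have hw : D.omega = D'.omega := by
    rw [rk_card _ _ h.fmono _ h.fimg, rk_card _ _ h'.fmono _ h'.fimg]
  have hf : ∀ a ∈ G.HI I, φ a = φ' a := fun a ha => by
    rw [rk_uniq _ _ h.fmono _ h.fimg a ha, rk_uniq _ _ h'.fmono _ h'.fimg a ha]
  have hp : ∀ a ∈ I, ψ a = ψ' a := fun a ha => by
    rw [rk_uniq _ _ h.pmono _ h.pimg a ha, rk_uniq _ _ h'.pmono _ h'.pimg a ha]
  have hl : D.lam = D'.lam := by
    refine lam_eq _ _ hn hw ?_
    intro k hk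
    rw [← h.fimg] at hk
    obtain ⟨a, ha, rfl⟩ := Finset.mem_image.1 hk
    rw [h.hv a ha, hf a ha, h'.hv a ha, hp]
    exact ((mem_HI _ _ _).1 ha).2
  have hu : D.up = D'.up := by
    rw [h.hup, h'.hup]
    exact Finset.image_congr fun a ha => hf a (Finset.mem_inter.1 ha).2
  have hd : D.dn = D'.dn := by
    rw [h.hdn, h'.hdn]
    exact Finset.image_congr fun a ha => hf a (Finset.mem_inter.1 ha).2
  have he : D.ed = D'.ed := by
    rw [h.hed, h'.hed]
    refine Finset.image_congr fun p hp => ?_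
    have hp := Finset.mem_filter.1 hp
    have h2 := hG.ed_HI hp.1 I
    rw [hf _ (h2.1.2 hp.2.1), hf _ (h2.2.2 hp.2.2)]
  cases D; cases D'; simp_all

theorem phi_eq (G : BD) (I : Finset ℕ) : G.phi I = rk (G.HI I) := rfl

/-- the number of selected vertices among the first `i` -/
theorem filt_len (I : Finset ℕ) (hI : ∀ x ∈ I, 1 ≤ x) (i : ℕ) :
    ((List.range i).filter (fun j => j + 1 ∈ I)).length = rk I i := by
  induction i with
  | zero =>
    simp only [List.range_zero, List.filter_nil, List.length_nil, rk]
    symm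
    rw [Finset.card_eq_zero, Finset.filter_eq_empty_iff]
    intro x hx; have := hI x hx; omega
  | succ i ih =>
    rw [List.range_succ, List.filter_append, List.length_append, ih]
    by_cases h : i + 1 ∈ I
    · have : I.filter (· ≤ i + 1) = insert (i + 1) (I.filter (· ≤ i)) := by
        ext x; simp only [Finset.mem_filter, Finset.mem_insert]; constructor
        · rintro ⟨a, b⟩; rcases Nat.lt_or_ge i x with h | h
          · left; omega
          · right; exact ⟨a, h⟩
        · rintro (rfl | ⟨a, b⟩)
          · exact ⟨h, le_rfl⟩
          · exact ⟨a, by omega⟩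
      simp [rk, this, h]
    · have : I.filter (· ≤ i + 1) = I.filter (· ≤ i) := by
        ext x; simp only [Finset.mem_filter]; constructor
        · rintro ⟨a, b⟩; refine ⟨a, ?_⟩
          rcases Nat.lt_or_ge i x with h' | h'
          · exact absurd ((by omega : x = i + 1) ▸ a) h
          · exact h'
        · rintro ⟨a, b⟩; exact ⟨a, by omega⟩
      simp [rk, this, h]

theorem HI_card (G : BD) (I : Finset ℕ) (i : ℕ) (hi : i ≤ G.nv) :
    ((G.HI I).filter (fun k => G.v k ≤ i)).card =
      (((List.range i).filter (fun j => j + 1 ∈ I)).map (fun j => G.lam.getD j 0)).sum := by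
  induction i with
  | zero =>
    simp only [List.range_zero, List.filter_nil, List.map_nil, List.sum_nil,
      Finset.card_eq_zero, Finset.filter_eq_empty_iff]
    intro k hk
    rw [mem_HI] at hk
    have := G.v_pos hk.1.1 hk.1.2
    omega
  | succ i ih =>
    have hi' : i < G.lam.length := hi
    rw [List.range_succ, List.filter_append, List.map_append, List.sum_append, ← ih (by omega)]
    have hsplit : (G.HI I).filter (fun k => G.v k ≤ i + 1) =
        (G.HI I).filter (fun k => G.v k ≤ i) ∪ (G.HI I).filter (fun k => G.v k = i + 1) := by
      ext x; simp only [Finset.mem_filter, Finset.mem_union]; constructor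
      · rintro ⟨a, b⟩
        rcases Nat.lt_or_ge i (G.v x) with h | h
        · right; exact ⟨a, by omega⟩
        · left; exact ⟨a, h⟩
      · rintro (⟨a, b⟩ | ⟨a, b⟩) <;> exact ⟨a, by omega⟩
    rw [hsplit, Finset.card_union_of_disjoint]
    swap
    · rw [Finset.disjoint_left]; intro x; simp only [Finset.mem_filter]; rintro ⟨_, a⟩ ⟨_, b⟩; omega
    congr 1
    by_cases h : i + 1 ∈ I
    · have h1 : (G.HI I).filter (fun k => G.v k = i + 1) = Finset.Ioc (G.pre i) (G.pre (i + 1)) := by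
        ext x
        simp only [Finset.mem_filter, Finset.mem_Ioc, mem_HI]
        constructor
        · rintro ⟨⟨⟨a, b⟩, c⟩, d⟩
          have h2 := G.v_le b i
          have h3 := G.v_le b (i + 1)
          constructor
          · by_contra hh; push Not at hh; have := h2.2 hh; omega
          · exact h3.1 d.le
        · rintro ⟨a, b⟩
          have hx : x ≤ G.omega := b.trans (G.pre_le _)
          have h2 := G.v_le hx i
          have h3 := G.v_le hx (i + 1)
          have h4 : G.v x = i + 1 := by
            have := h3.2 b
            have : ¬ G.v x ≤ i := fun hh => by have := h2.1 hh; omega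
            omega
          exact ⟨⟨⟨by omega, hx⟩, h4 ▸ h⟩, h4⟩
      rw [h1, Nat.card_Ioc]
      unfold pre
      rw [List.sum_take_succ _ _ hi']
      simp [h, hi']
    · have h1 : (G.HI I).filter (fun k => G.v k = i + 1) = ∅ := by
        rw [Finset.filter_eq_empty_iff]
        intro x hx hxi
        rw [mem_HI, hxi] at hx
        exact h hx.2
      simp [h1, h]

theorem sub_rel (G : BD) (I : Finset ℕ) (hI : I ⊆ Finset.Icc 1 G.nv) :
    Rel G I (G.sub I) (G.phi I) (rk I) := by
  have hI1 : ∀ x ∈ I, 1 ≤ x := fun x hx => (Finset.mem_Icc.1 (hI hx)).1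
  have hI2 : ∀ x ∈ I, x ≤ G.nv := fun x hx => (Finset.mem_Icc.1 (hI hx)).2
  have hn : (G.sub I).nv = I.card := by
    unfold nv sub
    rw [List.length_map, filt_len I hI1]
    unfold rk
    exact congrArg Finset.card (Finset.filter_true_of_mem hI2)
  have hpre : ∀ i ≤ G.nv, (G.sub I).pre (rk I i) = ((G.HI I).filter (fun k => G.v k ≤ i)).card := by
    intro i hi
    rw [HI_card G I i hi]
    unfold pre sub
    simp only
    obtain ⟨d, hd⟩ := Nat.exists_eq_add_of_le hi
    have h1 : List.range G.lam.length = List.range i ++ (List.range d).map (i + ·) := by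
      change List.range G.nv = _
      rw [hd, List.range_add]
    rw [h1, List.filter_append, List.map_append, List.take_left']
    rw [List.length_map, filt_len I hI1]
  have hw : (G.sub I).omega = (G.HI I).card := by
    have h := hpre G.nv le_rfl
    rw [Finset.filter_true_of_mem (fun k _ => G.v_le_nv k)] at h
    rw [← h, pre_of_le]
    rw [hn]; exact (congrArg Finset.card (Finset.filter_true_of_mem hI2)).ge
  refine ⟨hI, rk_mono I, by rw [rk_img, hn], ?_, ?_, ?_, rfl, rfl, rfl⟩
  · rw [phi_eq]; exact rk_mono _
  · rw [phi_eq, rk_img, hw]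
  · intro a ha
    rw [phi_eq]
    have ha' := (mem_HI _ _ _).1 ha
    have hle : rk (G.HI I) a ≤ (G.sub I).omega := by
      rw [hw]; exact Finset.card_le_card (Finset.filter_subset _ _)
    have hvp := G.v_pos ha'.1.1 ha'.1.2
    apply le_antisymm
    · rw [v_le _ hle, hpre _ (G.v_le_nv a)]
      apply Finset.card_le_card
      intro x; simp only [Finset.mem_filter]; rintro ⟨h1, h2⟩; exact ⟨h1, G.v_mono h2⟩
    · have h2 : rk I (G.v a) = rk I (G.v a - 1) + 1 := by
        unfold rk
        have : I.filter (· ≤ G.v a) = insert (G.v a) (I.filter (· ≤ G.v a - 1)) := by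
          ext x; simp only [Finset.mem_filter, Finset.mem_insert]; constructor
          · rintro ⟨c, d⟩; by_cases h : x = G.v a
            · exact Or.inl h
            · right; exact ⟨c, by omega⟩
          · rintro (rfl | ⟨c, d⟩)
            · exact ⟨ha'.2, le_rfl⟩
            · exact ⟨c, by omega⟩
        rw [this, Finset.card_insert_of_notMem]
        simp; intro _; omega
      rw [h2]
      by_contra hc
      have hc' : (G.sub I).v (rk (G.HI I) a) ≤ rk I (G.v a - 1) := by omega
      rw [v_le _ hle, hpre _ (by have := G.v_le_nv a; omega)] at hc'
      refine absurd hc' (not_le.2 (Finset.card_lt_card ?_))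
      rw [Finset.ssubset_iff_of_subset]
      · exact ⟨a, by simp [ha], by simp only [Finset.mem_filter]; omega⟩
      · intro x; simp only [Finset.mem_filter]
        rintro ⟨h1, h3⟩
        refine ⟨h1, ?_⟩
        by_contra hx
        have := G.v_mono (le_of_not_ge hx)
        omega

theorem Rel.eq_sub {G : BD} (hG : G.Valid) {I : Finset ℕ} {D : BD} {φ ψ : ℕ → ℕ}
    (h : Rel G I D φ ψ) : G.sub I = D := (sub_rel G I h.sub).uniq hG h

theorem sub_valid {G : BD} (hG : G.Valid) (I : Finset ℕ) (hI : I ⊆ Finset.Icc 1 G.nv) :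
    (G.sub I).Valid := by
  have h := sub_rel G I hI
  refine ⟨?_, ?_, ?_, ?_, ?_, ?_⟩
  · intro x hx
    simp only [sub, List.mem_map, List.mem_filter, List.mem_range] at hx
    obtain ⟨i, ⟨hi, _⟩, rfl⟩ := hx
    apply hG.1
    simp [hi]
  · rw [h.hup, ← h.fimg]; exact Finset.image_subset_image Finset.inter_subset_right
  · rw [h.hdn, ← h.fimg]; exact Finset.image_subset_image Finset.inter_subset_right
  · intro p hp
    rw [h.hed] at hp
    obtain ⟨q, hq, rfl⟩ := Finset.mem_image.1 hp
    obtain ⟨hq, h1, h2⟩ := Finset.mem_filter.1 hq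
    have h3 := hG.ed_HI hq I
    have h4 := hG.2.2.2.1 q hq
    have h1' := h3.1.2 h1
    have h2' := h3.2.2 h2
    refine ⟨?_, ?_, ?_⟩
    · rw [h.hup]; exact Finset.mem_image_of_mem _ (Finset.mem_inter.2 ⟨h4.1, h1'⟩)
    · rw [h.hdn]; exact Finset.mem_image_of_mem _ (Finset.mem_inter.2 ⟨h4.2.1, h2'⟩)
    · simp only
      rw [h.hv _ h1', h.hv _ h2']
      exact h.pmono h1 h2 h4.2.2
  · intro p hp p' hp' he
    rw [h.hed] at hp hp'
    obtain ⟨q, hq, rfl⟩ := Finset.mem_image.1 hp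
    obtain ⟨hq, h1, h2⟩ := Finset.mem_filter.1 hq
    obtain ⟨q', hq', rfl⟩ := Finset.mem_image.1 hp'
    obtain ⟨hq', h1', h2'⟩ := Finset.mem_filter.1 hq'
    have := h.fmono.injOn ((hG.ed_HI hq I).1.2 h1) ((hG.ed_HI hq' I).1.2 h1') he
    rw [hG.2.2.2.2.1 q hq q' hq' this]
  · intro p hp p' hp' he
    rw [h.hed] at hp hp'
    obtain ⟨q, hq, rfl⟩ := Finset.mem_image.1 hp
    obtain ⟨hq, h1, h2⟩ := Finset.mem_filter.1 hq
    obtain ⟨q', hq', rfl⟩ := Finset.mem_image.1 hp'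
    obtain ⟨hq', h1', h2'⟩ := Finset.mem_filter.1 hq'
    have := h.fmono.injOn ((hG.ed_HI hq I).2.2 h2) ((hG.ed_HI hq' I).2.2 h2') he
    rw [hG.2.2.2.2.2 q hq q' hq' this]

end BD

namespace BD

theorem nv_comp (G G' : BD) (s) : (comp G G' s).nv = G.nv + G'.nv := by simp [nv, comp]
theorem omega_comp (G G' : BD) (s) : (comp G G' s).omega = G.omega + G'.omega := by
  simp [omega, comp]
theorem pre_comp (G G' : BD) (s) (i : ℕ) :
    (comp G G' s).pre i = G.pre i + G'.pre (i - G.nv) := by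
  simp [pre, comp, List.take_append, nv]

theorem v_comp_le (G G' : BD) (s) {k : ℕ} (hk : k ≤ G.omega) : (comp G G' s).v k = G.v k := by
  refine eq_of_forall_ge_iff fun i => ?_
  rw [v_le _ (by rw [omega_comp]; omega), v_le _ hk, pre_comp]
  rcases Nat.le_total i G.nv with h | h
  · rw [Nat.sub_eq_zero_of_le h, pre_zero, add_zero]
  · rw [pre_of_le G h]; constructor <;> intro <;> omega

theorem v_comp_add (G G' : BD) (s) {k : ℕ} (h1 : 1 ≤ k) (hk : k ≤ G'.omega) :
    (comp G G' s).v (k + G.omega) = G'.v k + G.nv := by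
  refine eq_of_forall_ge_iff fun i => ?_
  rw [v_le _ (by rw [omega_comp]; omega), pre_comp]
  rcases Nat.lt_or_ge i G.nv with h | h
  · rw [Nat.sub_eq_zero_of_le h.le, pre_zero, add_zero]
    have := G.pre_le i
    constructor <;> intro <;> omega
  · rw [pre_of_le G h]
    have := G'.v_le hk (i - G.nv)
    constructor
    · intro h'; have := this.2 (by omega); omega
    · intro h'; have := this.1 (by omega); omega

theorem mem_ed_comp (G G' : BD) (s) (p : ℕ × ℕ) : p ∈ (comp G G' s).ed ↔
    p ∈ G.ed ∨ (∃ q ∈ s, (q.1, q.2 + G.omega) = p) ∨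
      ∃ q ∈ G'.ed, (q.1 + G.omega, q.2 + G.omega) = p := by
  simp only [comp, Finset.mem_union, Finset.mem_image, or_assoc]

theorem mem_up_comp (G G' : BD) (s) (k : ℕ) : k ∈ (comp G G' s).up ↔
    k ∈ G.up ∨ ∃ q ∈ G'.up, q + G.omega = k := by
  simp only [comp, Finset.mem_union, Finset.mem_image]

theorem mem_dn_comp (G G' : BD) (s) (k : ℕ) : k ∈ (comp G G' s).dn ↔
    k ∈ G.dn ∨ ∃ q ∈ G'.dn, q + G.omega = k := by
  simp only [comp, Finset.mem_union, Finset.mem_image]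

theorem Valid.up_le {G : BD} (h : G.Valid) {k} (hk : k ∈ G.up) : 1 ≤ k ∧ k ≤ G.omega :=
  Finset.mem_Icc.1 (h.2.1 hk)
theorem Valid.dn_le {G : BD} (h : G.Valid) {k} (hk : k ∈ G.dn) : 1 ≤ k ∧ k ≤ G.omega :=
  Finset.mem_Icc.1 (h.2.2.1 hk)
theorem Valid.ed_le {G : BD} (h : G.Valid) {p} (hk : p ∈ G.ed) :
    (1 ≤ p.1 ∧ p.1 ≤ G.omega) ∧ (1 ≤ p.2 ∧ p.2 ≤ G.omega) :=
  ⟨Finset.mem_Icc.1 (h.ed_mem hk).1, Finset.mem_Icc.1 (h.ed_mem hk).2⟩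

theorem mem_HfUp (G : BD) (k) : k ∈ G.HfUp ↔ k ∈ G.up ∧ ∀ p ∈ G.ed, p.1 ≠ k := by
  simp only [HfUp, Finset.mem_sdiff, Finset.mem_image, not_exists, not_and, ne_eq]
theorem mem_HfDn (G : BD) (k) : k ∈ G.HfDn ↔ k ∈ G.dn ∧ ∀ p ∈ G.ed, p.2 ≠ k := by
  simp only [HfDn, Finset.mem_sdiff, Finset.mem_image, not_exists, not_and, ne_eq]

theorem comp_valid {G G' : BD} (hG : G.Valid) (hG' : G'.Valid) {s} (hs : Matching G G' s) :
    (comp G G' s).Valid := by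
  have hs1 : ∀ p ∈ s, (1 ≤ p.1 ∧ p.1 ≤ G.omega) ∧ (1 ≤ p.2 ∧ p.2 ≤ G'.omega) := fun p hp =>
    ⟨hG.up_le ((mem_HfUp _ _).1 (hs.1 p hp).1).1, hG'.dn_le ((mem_HfDn _ _).1 (hs.1 p hp).2).1⟩
  refine ⟨?_, ?_, ?_, ?_, ?_, ?_⟩
  · intro x hx
    simp only [comp, List.mem_append] at hx
    exact hx.elim (hG.1 x) (hG'.1 x)
  · intro k hk
    rw [Finset.mem_Icc, omega_comp]
    rcases (mem_up_comp _ _ _ _).1 hk with h | ⟨q, h, rfl⟩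
    · have := hG.up_le h; omega
    · have := hG'.up_le h; omega
  · intro k hk
    rw [Finset.mem_Icc, omega_comp]
    rcases (mem_dn_comp _ _ _ _).1 hk with h | ⟨q, h, rfl⟩
    · have := hG.dn_le h; omega
    · have := hG'.dn_le h; omega
  · intro p hp
    rw [mem_up_comp, mem_dn_comp]
    rcases (mem_ed_comp _ _ _ _).1 hp with h | ⟨q, h, rfl⟩ | ⟨q, h, rfl⟩
    · have h1 := hG.2.2.2.1 p h
      have h2 := hG.ed_le h
      refine ⟨Or.inl h1.1, Or.inl h1.2.1, ?_⟩
      rw [v_comp_le _ _ _ h2.1.2, v_comp_le _ _ _ h2.2.2]; exact h1.2.2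
    · have h1 := hs.1 q h
      have h2 := hs1 q h
      refine ⟨Or.inl ((mem_HfUp _ _).1 h1.1).1, Or.inr ⟨_, ((mem_HfDn _ _).1 h1.2).1, rfl⟩, ?_⟩
      simp only
      rw [v_comp_le _ _ _ h2.1.2, v_comp_add _ _ _ h2.2.1 h2.2.2]
      have := G.v_le_nv q.1
      have := G'.v_pos h2.2.1 h2.2.2
      omega
    · have h1 := hG'.2.2.2.1 q h
      have h2 := hG'.ed_le h
      refine ⟨Or.inr ⟨_, h1.1, rfl⟩, Or.inr ⟨_, h1.2.1, rfl⟩, ?_⟩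
      simp only
      rw [v_comp_add _ _ _ h2.1.1 h2.1.2, v_comp_add _ _ _ h2.2.1 h2.2.2]; omega
  · intro p hp p' hp' he
    rcases (mem_ed_comp _ _ _ _).1 hp with h | ⟨q, h, rfl⟩ | ⟨q, h, rfl⟩ <;>
    rcases (mem_ed_comp _ _ _ _).1 hp' with h' | ⟨q', h', rfl⟩ | ⟨q', h', rfl⟩
    · exact hG.2.2.2.2.1 p h p' h' he
    · exact absurd he (((mem_HfUp _ _).1 (hs.1 q' h').1).2 p h)
    · have := hG.ed_le h; have := hG'.ed_le h'; simp only at he; omega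
    · exact absurd he.symm (((mem_HfUp _ _).1 (hs.1 q h).1).2 p' h')
    · rw [hs.2.1 q h q' h' he]
    · have := hs1 q h; have := hG'.ed_le h'; simp only at he; omega
    · have := hG.ed_le h'; have := hG'.ed_le h; simp only at he; omega
    · have := hs1 q' h'; have := hG'.ed_le h; simp only at he; omega
    · rw [hG'.2.2.2.2.1 q h q' h' (by simpa using he)]
  · intro p hp p' hp' he
    rcases (mem_ed_comp _ _ _ _).1 hp with h | ⟨q, h, rfl⟩ | ⟨q, h, rfl⟩ <;>
    rcases (mem_ed_comp _ _ _ _).1 hp' with h' | ⟨q', h', rfl⟩ | ⟨q', h', rfl⟩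
    · exact hG.2.2.2.2.2 p h p' h' he
    · have := hG.ed_le h; have := hs1 q' h'; simp only at he; omega
    · have := hG.ed_le h; have := hG'.ed_le h'; simp only at he; omega
    · have := hG.ed_le h'; have := hs1 q h; simp only at he; omega
    · rw [hs.2.2 q h q' h' (by simpa using he)]
    · exact absurd (by simpa using he.symm) (((mem_HfDn _ _).1 (hs.1 q h).2).2 q' h')
    · have := hG.ed_le h'; have := hG'.ed_le h; simp only at he; omega
    · exact absurd (by simpa using he) (((mem_HfDn _ _).1 (hs.1 q' h').2).2 q h)
    · rw [hG'.2.2.2.2.2 q h q' h' (by simpa using he)]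

theorem matching_empty (G G' : BD) : Matching G G' ∅ := by simp [Matching]

theorem juxt_valid {G G' : BD} (hG : G.Valid) (hG' : G'.Valid) : (juxt G G').Valid :=
  comp_valid hG hG' (matching_empty G G')

theorem mem_ed_juxt (G G' : BD) (p : ℕ × ℕ) : p ∈ (juxt G G').ed ↔
    p ∈ G.ed ∨ ∃ q ∈ G'.ed, (q.1 + G.omega, q.2 + G.omega) = p := by
  unfold juxt; rw [mem_ed_comp]; simp

theorem ext' {G G' : BD} (h1 : G.lam = G'.lam) (h2 : G.up = G'.up) (h3 : G.dn = G'.dn)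
    (h4 : G.ed = G'.ed) : G = G' := by
  cases G; cases G'; simp_all

theorem juxt_assoc (A B C : BD) : juxt (juxt A B) C = juxt A (juxt B C) := by
  have hw : (juxt A B).omega = A.omega + B.omega := omega_comp _ _ _
  apply ext'
  · simp [juxt, comp]
  · ext k
    rw [juxt, mem_up_comp, hw, juxt, juxt, mem_up_comp, mem_up_comp, juxt]
    simp only [mem_up_comp, or_assoc]
    refine or_congr_right ?_
    constructor
    · rintro (⟨q, h, rfl⟩ | ⟨q, h, rfl⟩)
      · exact ⟨q, Or.inl h, rfl⟩
      · exact ⟨q + B.omega, Or.inr ⟨q, h, rfl⟩, by ring⟩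
    · rintro ⟨q, (h | ⟨q, h, rfl⟩), rfl⟩
      · exact Or.inl ⟨q, h, rfl⟩
      · exact Or.inr ⟨q, h, by ring⟩
  · ext k
    rw [juxt, mem_dn_comp, hw, juxt, juxt, mem_dn_comp, mem_dn_comp, juxt]
    simp only [mem_dn_comp, or_assoc]
    refine or_congr_right ?_
    constructor
    · rintro (⟨q, h, rfl⟩ | ⟨q, h, rfl⟩)
      · exact ⟨q, Or.inl h, rfl⟩
      · exact ⟨q + B.omega, Or.inr ⟨q, h, rfl⟩, by ring⟩
    · rintro ⟨q, (h | ⟨q, h, rfl⟩), rfl⟩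
      · exact Or.inl ⟨q, h, rfl⟩
      · exact Or.inr ⟨q, h, by ring⟩
  · ext1 k
    rw [mem_ed_juxt, mem_ed_juxt, mem_ed_juxt, hw, or_assoc]
    refine or_congr_right ?_
    simp only [mem_ed_juxt]
    constructor
    · rintro (⟨q, h, rfl⟩ | ⟨q, h, rfl⟩)
      · exact ⟨q, Or.inl h, rfl⟩
      · exact ⟨_, Or.inr ⟨q, h, rfl⟩, by simp only [Prod.mk.injEq]; constructor <;> ring⟩
    · rintro ⟨q, (h | ⟨q, h, rfl⟩), rfl⟩
      · exact Or.inl ⟨q, h, rfl⟩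
      · exact Or.inr ⟨q, h, by simp only [Prod.mk.injEq]; constructor <;> ring⟩

theorem eps_juxt (A : BD) : juxt eps A = A := by
  apply ext' <;> simp [juxt, comp, eps, omega]

theorem juxt_eps (A : BD) : juxt A eps = A := by
  apply ext' <;> simp [juxt, comp, eps]

theorem eq_eps {A : BD} (hA : A.Valid) (h : A.nv = 0) : A = eps := by
  have hl : A.lam = [] := List.length_eq_zero_iff.1 h
  have hw : A.omega = 0 := by simp [omega, hl]
  apply ext'
  · exact hl
  · rw [Finset.eq_empty_of_forall_notMem (s := A.up)]
    · rfl
    · intro k hk; have := hA.up_le hk; omega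
  · rw [Finset.eq_empty_of_forall_notMem (s := A.dn)]
    · rfl
    · intro k hk; have := hA.dn_le hk; omega
  · rw [Finset.eq_empty_of_forall_notMem (s := A.ed)]
    · rfl
    · intro k hk; have := hA.ed_le hk; omega

/-- union of a vertex set of `G` and a shifted vertex set of `G'` -/
def jn (G : BD) (I I' : Finset ℕ) : Finset ℕ := I ∪ I'.image (· + G.nv)

theorem mem_jn_left {G : BD} {I I' : Finset ℕ} (hI' : ∀ x ∈ I', 1 ≤ x) {i : ℕ} (hi : i ≤ G.nv) :
    i ∈ jn G I I' ↔ i ∈ I := by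
  simp only [jn, Finset.mem_union, Finset.mem_image]
  constructor
  · rintro (h | ⟨x, hx, h⟩)
    · exact h
    · have := hI' x hx; omega
  · exact Or.inl

theorem mem_jn_right {G : BD} {I I' : Finset ℕ} (hI : ∀ x ∈ I, x ≤ G.nv) {i : ℕ} (hi : 1 ≤ i) :
    i + G.nv ∈ jn G I I' ↔ i ∈ I' := by
  simp only [jn, Finset.mem_union, Finset.mem_image]
  constructor
  · rintro (h | ⟨x, hx, h⟩)
    · have := hI _ h; omega
    · have : x = i := by omega
      exact this ▸ hx
  · exact fun h => Or.inr ⟨i, h, rfl⟩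

theorem HI_comp (G G' : BD) (s) {I I' : Finset ℕ} (hI : I ⊆ Finset.Icc 1 G.nv)
    (hI' : I' ⊆ Finset.Icc 1 G'.nv) :
    (comp G G' s).HI (jn G I I') = G.HI I ∪ (G'.HI I').image (· + G.omega) := by
  have h1 : ∀ x ∈ I, x ≤ G.nv := fun x hx => (Finset.mem_Icc.1 (hI hx)).2
  have h2 : ∀ x ∈ I', 1 ≤ x := fun x hx => (Finset.mem_Icc.1 (hI' hx)).1
  ext k
  simp only [Finset.mem_union, Finset.mem_image, mem_HI, omega_comp]
  constructor
  · rintro ⟨⟨a, b⟩, c⟩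
    rcases Nat.lt_or_ge G.omega k with h | h
    · right
      obtain ⟨x, rfl⟩ := Nat.exists_eq_add_of_lt h
      have e : G.omega + x + 1 = (x + 1) + G.omega := by ring
      rw [e, v_comp_add _ _ _ (by omega) (by omega), mem_jn_right h1
        (G'.v_pos (by omega) (by omega))] at c
      exact ⟨x + 1, ⟨⟨by omega, by omega⟩, c⟩, by omega⟩
    · left
      rw [v_comp_le _ _ _ h, mem_jn_left h2 (G.v_le_nv _)] at c
      exact ⟨⟨a, h⟩, c⟩
  · rintro (⟨⟨a, b⟩, c⟩ | ⟨x, ⟨⟨a, b⟩, c⟩, rfl⟩)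
    · rw [v_comp_le _ _ _ b, mem_jn_left h2 (G.v_le_nv _)]
      exact ⟨⟨a, by omega⟩, c⟩
    · rw [v_comp_add _ _ _ a b, mem_jn_right h1 (G'.v_pos a b)]
      exact ⟨⟨by omega, by omega⟩, c⟩

/-- piecewise function -/
def pw (m m' : ℕ) (f f' : ℕ → ℕ) (k : ℕ) : ℕ := if k ≤ m then f k else f' (k - m) + m'

theorem pw_left {m m' : ℕ} {f f' : ℕ → ℕ} {k : ℕ} (h : k ≤ m) : pw m m' f f' k = f k := by
  simp [pw, h]
theorem pw_right {m m' : ℕ} {f f' : ℕ → ℕ} {k : ℕ} (h : 1 ≤ k) :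
    pw m m' f f' (k + m) = f' k + m' := by
  have : ¬ (k + m ≤ m) := by omega
  simp [pw, this]

theorem pw_mono {m m' d d' : ℕ} {f f' : ℕ → ℕ} {S S' : Finset ℕ} (hS : ∀ x ∈ S, x ≤ m)
    (hS' : ∀ x ∈ S', 1 ≤ x) (hf : StrictMonoOn f S) (hf' : StrictMonoOn f' S')
    (hi : S.image f = Finset.Icc 1 m') (hi' : S'.image f' = Finset.Icc 1 d) (hd : d' = m' + d) :
    StrictMonoOn (pw m m' f f') (S ∪ S'.image (· + m) : Finset ℕ) ∧
    (S ∪ S'.image (· + m)).image (pw m m' f f') = Finset.Icc 1 d' := by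
  have b1 : ∀ x ∈ S, 1 ≤ f x ∧ f x ≤ m' := fun x hx =>
    Finset.mem_Icc.1 (hi ▸ Finset.mem_image_of_mem f hx)
  have b2 : ∀ x ∈ S', 1 ≤ f' x ∧ f' x ≤ d := fun x hx =>
    Finset.mem_Icc.1 (hi' ▸ Finset.mem_image_of_mem f' hx)
  constructor
  · intro a ha b hb hab
    simp only [Finset.coe_union, Finset.coe_image, Set.mem_union, Set.mem_image,
      Finset.mem_coe] at ha hb
    rcases ha with ha | ⟨a, ha, rfl⟩ <;> rcases hb with hb | ⟨b, hb, rfl⟩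
    · rw [pw_left (hS _ ha), pw_left (hS _ hb)]; exact hf ha hb hab
    · rw [pw_left (hS _ ha), pw_right (hS' _ hb)]
      have := b1 a ha; have := b2 b hb; omega
    · have := hS _ hb; have := hS' _ ha; omega
    · rw [pw_right (hS' _ ha), pw_right (hS' _ hb)]
      have := hf' ha hb (by simpa using hab); omega
  · ext y
    simp only [Finset.mem_image, Finset.mem_union, Finset.mem_Icc]
    constructor
    · rintro ⟨a, (ha | ⟨a, ha, rfl⟩), rfl⟩
      · rw [pw_left (hS _ ha)]; have := b1 a ha; omega
      · rw [pw_right (hS' _ ha)]; have := b2 a ha; omega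
    · rintro ⟨h1, h2⟩
      rcases Nat.lt_or_ge m' y with h | h
      · have : y - m' ∈ S'.image f' := by rw [hi', Finset.mem_Icc]; omega
        obtain ⟨a, ha, h3⟩ := Finset.mem_image.1 this
        refine ⟨a + m, Or.inr ⟨a, ha, rfl⟩, ?_⟩
        rw [pw_right (hS' _ ha)]; omega
      · have : y ∈ S.image f := by rw [hi, Finset.mem_Icc]; omega
        obtain ⟨a, ha, h3⟩ := Finset.mem_image.1 this
        exact ⟨a, Or.inl ha, by rw [pw_left (hS _ ha), h3]⟩

theorem img_aux {m m' : ℕ} {φ φ' : ℕ → ℕ} {U U' H H' : Finset ℕ} (hU : ∀ x ∈ U, x ≤ m)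
    (hU' : ∀ x ∈ U', 1 ≤ x) (hH : ∀ x ∈ H, x ≤ m) (hH' : ∀ x ∈ H', 1 ≤ x) :
    (U ∩ H).image φ ∪ ((U' ∩ H').image φ').image (· + m') =
      ((U ∪ U'.image (· + m)) ∩ (H ∪ H'.image (· + m))).image (pw m m' φ φ') := by
  ext y
  simp only [Finset.mem_image, Finset.mem_union, Finset.mem_inter]
  constructor
  · rintro (⟨x, ⟨h1, h2⟩, rfl⟩ | ⟨_, ⟨x, ⟨h1, h2⟩, rfl⟩, rfl⟩)
    · exact ⟨x, ⟨Or.inl h1, Or.inl h2⟩, pw_left (hU _ h1)⟩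
    · exact ⟨x + m, ⟨Or.inr ⟨x, h1, rfl⟩, Or.inr ⟨x, h2, rfl⟩⟩, pw_right (hU' _ h1)⟩
  · rintro ⟨x, ⟨h1 | ⟨a, h1, rfl⟩, h2⟩, rfl⟩
    · rw [pw_left (hU _ h1)]
      rcases h2 with h2 | ⟨b, h2, rfl⟩
      · exact Or.inl ⟨x, ⟨h1, h2⟩, rfl⟩
      · have := hU _ h1; have := hH' _ h2; omega
    · rw [pw_right (hU' _ h1)]
      rcases h2 with h2 | ⟨b, h2, h3⟩
      · have := hU' _ h1; have := hH _ h2; omega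
      · have : b = a := by omega
        subst this
        exact Or.inr ⟨_, ⟨b, ⟨h1, h2⟩, rfl⟩, rfl⟩

theorem Rel.juxt {G G' D D' : BD} {I I' : Finset ℕ} {φ ψ φ' ψ' : ℕ → ℕ} (hG : G.Valid)
    (hG' : G'.Valid) (h : Rel G I D φ ψ) (h' : Rel G' I' D' φ' ψ') :
    Rel (juxt G G') (jn G I I') (juxt D D') (pw G.omega D.omega φ φ') (pw G.nv D.nv ψ ψ') := by
  have h1 : ∀ x ∈ I, x ≤ G.nv := fun x hx => (Finset.mem_Icc.1 (h.sub hx)).2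
  have h2 : ∀ x ∈ I', 1 ≤ x := fun x hx => (Finset.mem_Icc.1 (h'.sub hx)).1
  have k1 : ∀ x ∈ G.HI I, x ≤ G.omega := fun x hx => ((mem_HI _ _ _).1 hx).1.2
  have k2 : ∀ x ∈ G'.HI I', 1 ≤ x := fun x hx => ((mem_HI _ _ _).1 hx).1.1
  have hHI : (BD.juxt G G').HI (jn G I I') = G.HI I ∪ (G'.HI I').image (· + G.omega) :=
    HI_comp G G' ∅ h.sub h'.sub
  have P := pw_mono h1 h2 h.pmono h'.pmono h.pimg h'.pimg (nv_comp D D' ∅)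
  have F := pw_mono k1 k2 h.fmono h'.fmono h.fimg h'.fimg (omega_comp D D' ∅)
  refine ⟨?_, P.1, P.2, ?_, ?_, ?_, ?_, ?_, ?_⟩
  · intro x hx
    have hn : (BD.juxt G G').nv = G.nv + G'.nv := nv_comp _ _ _
    simp only [jn, Finset.mem_union, Finset.mem_image] at hx
    rw [Finset.mem_Icc, hn]
    rcases hx with hx | ⟨x, hx, rfl⟩
    · have := Finset.mem_Icc.1 (h.sub hx); omega
    · have := Finset.mem_Icc.1 (h'.sub hx); omega
  · rw [hHI]; exact F.1
  · rw [hHI]; exact F.2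
  · intro a ha
    rw [hHI, Finset.mem_union, Finset.mem_image] at ha
    rcases ha with ha | ⟨a, ha, rfl⟩
    · have hD : 1 ≤ φ a ∧ φ a ≤ D.omega :=
        Finset.mem_Icc.1 (h.fimg ▸ Finset.mem_image_of_mem φ ha)
      rw [pw_left (k1 _ ha), BD.juxt, BD.juxt, v_comp_le _ _ _ hD.2, v_comp_le _ _ _ (k1 _ ha),
        pw_left (G.v_le_nv _), h.hv a ha]
    · have hD : 1 ≤ φ' a ∧ φ' a ≤ D'.omega :=
        Finset.mem_Icc.1 (h'.fimg ▸ Finset.mem_image_of_mem φ' ha)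
      have ha' := (mem_HI _ _ _).1 ha
      rw [pw_right (k2 _ ha), BD.juxt, BD.juxt, v_comp_add _ _ _ hD.1 hD.2,
        v_comp_add _ _ _ ha'.1.1 ha'.1.2, pw_right (G'.v_pos ha'.1.1 ha'.1.2), h'.hv a ha]
  · rw [hHI]
    change D.up ∪ D'.up.image (· + D.omega) = _
    rw [h.hup, h'.hup]
    exact img_aux (fun x hx => (hG.up_le hx).2) (fun x hx => (hG'.up_le hx).1) k1 k2
  · rw [hHI]
    change D.dn ∪ D'.dn.image (· + D.omega) = _
    rw [h.hdn, h'.hdn]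
    exact img_aux (fun x hx => (hG.dn_le hx).2) (fun x hx => (hG'.dn_le hx).1) k1 k2
  · ext1 p
    rw [mem_ed_juxt, h.hed, h'.hed]
    simp only [Finset.mem_image, Finset.mem_filter, mem_ed_juxt]
    constructor
    · rintro (⟨q, ⟨hq, hq1, hq2⟩, rfl⟩ | ⟨_, ⟨q, ⟨hq, hq1, hq2⟩, rfl⟩, rfl⟩)
      · have hl := hG.ed_le hq
        refine ⟨q, ⟨Or.inl hq, ?_, ?_⟩, ?_⟩
        · rw [BD.juxt, v_comp_le _ _ _ hl.1.2, mem_jn_left h2 (G.v_le_nv _)]; exact hq1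
        · rw [BD.juxt, v_comp_le _ _ _ hl.2.2, mem_jn_left h2 (G.v_le_nv _)]; exact hq2
        · rw [pw_left hl.1.2, pw_left hl.2.2]
      · have hl := hG'.ed_le hq
        refine ⟨_, ⟨Or.inr ⟨q, hq, rfl⟩, ?_, ?_⟩, ?_⟩
        · rw [BD.juxt, v_comp_add _ _ _ hl.1.1 hl.1.2, mem_jn_right h1 (G'.v_pos hl.1.1 hl.1.2)]
          exact hq1
        · rw [BD.juxt, v_comp_add _ _ _ hl.2.1 hl.2.2, mem_jn_right h1 (G'.v_pos hl.2.1 hl.2.2)]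
          exact hq2
        · simp only [pw_right hl.1.1, pw_right hl.2.1]
    · rintro ⟨p, ⟨hp | ⟨q, hq, rfl⟩, hp1, hp2⟩, rfl⟩
      · have hl := hG.ed_le hp
        rw [BD.juxt, v_comp_le _ _ _ hl.1.2, mem_jn_left h2 (G.v_le_nv _)] at hp1
        rw [BD.juxt, v_comp_le _ _ _ hl.2.2, mem_jn_left h2 (G.v_le_nv _)] at hp2
        exact Or.inl ⟨p, ⟨hp, hp1, hp2⟩, by rw [pw_left hl.1.2, pw_left hl.2.2]⟩
      · have hl := hG'.ed_le hq
        rw [BD.juxt, v_comp_add _ _ _ hl.1.1 hl.1.2, mem_jn_right h1 (G'.v_pos hl.1.1 hl.1.2)]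
          at hp1
        rw [BD.juxt, v_comp_add _ _ _ hl.2.1 hl.2.2, mem_jn_right h1 (G'.v_pos hl.2.1 hl.2.2)]
          at hp2
        exact Or.inr ⟨_, ⟨q, ⟨hq, hp1, hp2⟩, rfl⟩,
          by simp only [pw_right hl.1.1, pw_right hl.2.1]⟩

theorem Rel.HI_img {G D : BD} {I : Finset ℕ} {φ ψ : ℕ → ℕ}
    (h : Rel G I D φ ψ) {J : Finset ℕ} (hJ : J ⊆ I) :
    D.HI (J.image ψ) = (G.HI J).image φ := by
  ext k
  have hsub : ∀ a, a ∈ G.HI J → a ∈ G.HI I := fun a ha => by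
    rw [mem_HI] at *; exact ⟨ha.1, hJ ha.2⟩
  constructor
  · intro hk
    rw [mem_HI] at hk
    have : k ∈ (G.HI I).image φ := by rw [h.fimg, Finset.mem_Icc]; exact hk.1
    obtain ⟨a, ha, rfl⟩ := Finset.mem_image.1 this
    refine Finset.mem_image_of_mem _ ?_
    rw [h.hv a ha, Finset.mem_image] at hk
    obtain ⟨_, j, hj, e⟩ := hk
    rw [mem_HI] at ha ⊢
    refine ⟨ha.1, ?_⟩
    rw [← h.pmono.injOn (hJ hj) ha.2 e]; exact hj
  · intro hk
    obtain ⟨a, ha, rfl⟩ := Finset.mem_image.1 hk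
    have h1 := hsub a ha
    rw [mem_HI, h.hv a h1]
    refine ⟨?_, Finset.mem_image_of_mem _ ((mem_HI _ _ _).1 ha).2⟩
    exact Finset.mem_Icc.1 (h.fimg ▸ Finset.mem_image_of_mem φ h1)

theorem Rel.trans {G D D' : BD} {I J : Finset ℕ} {φ ψ φ' ψ' : ℕ → ℕ} (hG : G.Valid)
    (h : Rel G I D φ ψ) (hJ : J ⊆ I) (h' : Rel D (J.image ψ) D' φ' ψ') :
    Rel G J D' (φ' ∘ φ) (ψ' ∘ ψ) := by
  have hH := h.HI_img hJ
  have hsub : ∀ a, a ∈ G.HI J → a ∈ G.HI I := fun a ha => by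
    rw [mem_HI] at *; exact ⟨ha.1, hJ ha.2⟩
  have hinter : ∀ U : Finset ℕ, ((U ∩ G.HI I).image φ ∩ D.HI (J.image ψ)).image φ' =
      (U ∩ G.HI J).image (φ' ∘ φ) := by
    intro U
    rw [hH, ← Finset.image_image]
    congr 1
    ext k
    simp only [Finset.mem_inter, Finset.mem_image]
    constructor
    · rintro ⟨⟨a, ⟨ha, ha'⟩, rfl⟩, b, hb, e⟩
      have := h.fmono.injOn (hsub b hb) ha' e
      exact ⟨a, ⟨ha, this ▸ hb⟩, rfl⟩
    · rintro ⟨a, ⟨ha, ha'⟩, rfl⟩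
      exact ⟨⟨a, ⟨ha, hsub a ha'⟩, rfl⟩, a, ha', rfl⟩
  refine ⟨hJ.trans h.sub, ?_, ?_, ?_, ?_, ?_, ?_, ?_, ?_⟩
  · exact h'.pmono.comp (h.pmono.mono (by exact_mod_cast hJ)) fun a ha => by
      simpa using ⟨a, ha, rfl⟩
  · rw [← Finset.image_image, h'.pimg]
  · refine h'.fmono.comp (h.fmono.mono (fun a ha => hsub a ha)) fun a ha => ?_
    rw [hH]; exact_mod_cast Finset.mem_image_of_mem φ ha
  · rw [← Finset.image_image, ← hH, h'.fimg]
  · intro a ha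
    have : φ a ∈ D.HI (J.image ψ) := by rw [hH]; exact Finset.mem_image_of_mem φ ha
    rw [Function.comp_apply, h'.hv _ this, h.hv a (hsub a ha)]; rfl
  · rw [h'.hup, h.hup, hinter]
  · rw [h'.hdn, h.hdn, hinter]
  · have hmem : ∀ q, G.v q ∈ I → (q ∈ G.HI I) → (D.v (φ q) ∈ J.image ψ ↔ G.v q ∈ J) := by
      intro q hq hq'
      rw [h.hv q hq', Finset.mem_image]
      constructor
      · rintro ⟨j, hj, e⟩; rw [← h.pmono.injOn (hJ hj) hq e]; exact hj
      · exact fun hj => ⟨_, hj, rfl⟩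
    rw [h'.hed, h.hed]
    ext1 p
    simp only [Finset.mem_image, Finset.mem_filter]
    constructor
    · rintro ⟨_, ⟨⟨q, ⟨hq, hq1, hq2⟩, rfl⟩, a1, a2⟩, rfl⟩
      have hh := hG.ed_HI hq I
      have b1 := (hmem q.1 hq1 (hh.1.2 hq1)).1 (by simpa using a1)
      have b2 := (hmem q.2 hq2 (hh.2.2 hq2)).1 (by simpa using a2)
      exact ⟨q, ⟨hq, b1, b2⟩, rfl⟩
    · rintro ⟨q, ⟨hq, hq1, hq2⟩, rfl⟩
      have hh := hG.ed_HI hq I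
      have b1 := (hmem q.1 (hJ hq1) (hh.1.2 (hJ hq1))).2 hq1
      have b2 := (hmem q.2 (hJ hq2) (hh.2.2 (hJ hq2))).2 hq2
      exact ⟨_, ⟨⟨q, ⟨hq, hJ hq1, hJ hq2⟩, rfl⟩, by simpa using b1, by simpa using b2⟩, rfl⟩

end BD

namespace BD

theorem HI_full (G : BD) : G.HI (Finset.Icc 1 G.nv) = Finset.Icc 1 G.omega := by
  ext k
  rw [mem_HI]
  constructor
  · exact fun h => Finset.mem_Icc.2 h.1
  · exact fun h => ⟨Finset.mem_Icc.1 h, G.v_mem h⟩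

theorem sub_full {G : BD} (hG : G.Valid) : G.sub (Finset.Icc 1 G.nv) = G := by
  refine Rel.eq_sub hG (φ := id) (ψ := id) ⟨subset_rfl, fun _ _ _ _ h => h, by simp,
    fun _ _ _ _ h => h, by simp [HI_full], fun _ _ => rfl, ?_, ?_, ?_⟩
  · rw [HI_full, Finset.image_id, Finset.inter_eq_left.2 hG.2.1]
  · rw [HI_full, Finset.image_id, Finset.inter_eq_left.2 hG.2.2.1]
  · rw [Finset.filter_true_of_mem]
    · simp
    · intro p hp
      exact ⟨G.v_mem (hG.ed_mem hp).1, G.v_mem (hG.ed_mem hp).2⟩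

theorem nv_sub (G : BD) (I : Finset ℕ) (hI : I ⊆ Finset.Icc 1 G.nv) : (G.sub I).nv = I.card :=
  rk_card _ _ (sub_rel G I hI).pmono _ (sub_rel G I hI).pimg

theorem sub_empty {G : BD} (hG : G.Valid) : G.sub ∅ = eps :=
  eq_eps (sub_valid hG ∅ (by simp)) (by rw [nv_sub _ _ (by simp)]; simp)

theorem nv_juxt (G G' : BD) : (juxt G G').nv = G.nv + G'.nv := nv_comp _ _ _

theorem sub_juxt {G G' : BD} (hG : G.Valid) (hG' : G'.Valid) {I I' : Finset ℕ}
    (hI : I ⊆ Finset.Icc 1 G.nv) (hI' : I' ⊆ Finset.Icc 1 G'.nv) :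
    (juxt G G').sub (jn G I I') = juxt (G.sub I) (G'.sub I') :=
  Rel.eq_sub (juxt_valid hG hG') (Rel.juxt hG hG' (sub_rel G I hI) (sub_rel G' I' hI'))

theorem jn_Icc (G : BD) (m : ℕ) : jn G (Finset.Icc 1 G.nv) (Finset.Icc 1 m) =
    Finset.Icc 1 (G.nv + m) := by
  ext k
  simp only [jn, Finset.mem_union, Finset.mem_image, Finset.mem_Icc]
  constructor
  · rintro (h | ⟨x, h, rfl⟩) <;> omega
  · intro h
    rcases Nat.lt_or_ge G.nv k with h' | h'
    · exact Or.inr ⟨k - G.nv, by omega, by omega⟩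
    · exact Or.inl (by omega)

theorem sub_juxt_Icc {A B : BD} (hA : A.Valid) (hB : B.Valid) {m : ℕ} (hm : m ≤ B.nv) :
    (juxt A B).sub (Finset.Icc 1 (A.nv + m)) = juxt A (B.sub (Finset.Icc 1 m)) := by
  rw [← jn_Icc, sub_juxt hA hB subset_rfl (Finset.Icc_subset_Icc_right hm), sub_full hA]

theorem sub_juxt_left {A B : BD} (hA : A.Valid) (hB : B.Valid) :
    (juxt A B).sub (Finset.Icc 1 A.nv) = A := by
  have := sub_juxt_Icc hA hB (Nat.zero_le _)
  simpa [sub_empty hB, juxt_eps] using this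

theorem sub_juxt_right {A B : BD} (hA : A.Valid) (hB : B.Valid) :
    (juxt A B).sub (Finset.Ioc A.nv (A.nv + B.nv)) = B := by
  have e : Finset.Ioc A.nv (A.nv + B.nv) = jn A ∅ (Finset.Icc 1 B.nv) := by
    ext k
    simp only [jn, Finset.mem_union, Finset.mem_image, Finset.mem_Icc, Finset.mem_Ioc,
      Finset.notMem_empty, false_or]
    constructor
    · intro h; exact ⟨k - A.nv, by omega, by omega⟩
    · rintro ⟨x, h, rfl⟩; omega
  rw [e, sub_juxt hA hB (by simp) subset_rfl, sub_full hB, sub_empty hA, eps_juxt]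

theorem juxt_cancel {A B C D : BD} (hA : A.Valid) (hB : B.Valid) (hC : C.Valid) (hD : D.Valid)
    (h : juxt A B = juxt C D) (hn : A.nv = C.nv) : A = C ∧ B = D := by
  have hm : B.nv = D.nv := by
    have := congrArg nv h
    rw [nv_juxt, nv_juxt] at this; omega
  constructor
  · rw [← sub_juxt_left hA hB, ← sub_juxt_left hC hD, h, hn]
  · rw [← sub_juxt_right hA hB, ← sub_juxt_right hC hD, h, hn, hm]

theorem juxt_levi {A B C D : BD} (hA : A.Valid) (hB : B.Valid) (hC : C.Valid) (hD : D.Valid)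
    (h : juxt A B = juxt C D) (hn : A.nv ≤ C.nv) : ∃ E : BD, E.Valid ∧ C = juxt A E := by
  have hm : C.nv - A.nv ≤ B.nv := by
    have := congrArg nv h
    rw [nv_juxt, nv_juxt] at this; omega
  refine ⟨B.sub (Finset.Icc 1 (C.nv - A.nv)),
    sub_valid hB _ (Finset.Icc_subset_Icc_right hm), ?_⟩
  rw [← sub_juxt_Icc hA hB hm, h, Nat.add_sub_cancel' hn, sub_juxt_left hC hD]

theorem nv_pos {A : BD} (hA : A.Valid) (h : A ≠ eps) : 0 < A.nv :=
  Nat.pos_of_ne_zero fun h' => h (eq_eps hA h')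

theorem indiv_first {A B C D : BD} (hA : A.Valid) (hB : B.Valid) (hC : C.Valid) (hD : D.Valid)
    (hA0 : A ≠ eps) (hCi : C.Indiv)
    (h : juxt A B = juxt C D) (hn : A.nv ≤ C.nv) : A = C := by
  obtain ⟨E, hE, e⟩ := juxt_levi hA hB hC hD h hn
  rcases hCi A E hA hE e with h' | h'
  · exact h'
  · have := congrArg nv e
    rw [nv_juxt, h'] at this
    have := nv_pos hA hA0
    omega

end BD

instance bmon : Monoid BDiagram where
  mul A B := ⟨BD.juxt A.1 B.1, BD.juxt_valid A.2 B.2⟩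
  one := ⟨BD.eps, BD.eps_valid⟩
  mul_assoc A B C := Subtype.ext (BD.juxt_assoc _ _ _)
  one_mul A := Subtype.ext (BD.eps_juxt _)
  mul_one A := Subtype.ext (BD.juxt_eps _)

theorem bmul_val (A B : BDiagram) : (A * B).1 = BD.juxt A.1 B.1 := rfl
theorem bone_val : (1 : BDiagram).1 = BD.eps := rfl

/-- evaluation of words of indivisibles -/
def wd : FreeMonoid GSet →* BDiagram := FreeMonoid.lift fun g => g.1

theorem wd_of (g : GSet) : wd (FreeMonoid.of g) = g.1 := FreeMonoid.lift_eval_of _ _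

theorem wd_inj : Function.Injective wd := by
  have key : ∀ (g h : GSet) (w w' : FreeMonoid GSet),
      wd (FreeMonoid.of g * w) = wd (FreeMonoid.of h * w') → g = h ∧ wd w = wd w' := by
    intro g h w w' e
    rw [map_mul, map_mul, wd_of, wd_of] at e
    have e' := congrArg Subtype.val e
    rw [bmul_val, bmul_val] at e'
    have e1 : g.1.1 = h.1.1 := by
      rcases le_total g.1.1.nv h.1.1.nv with hl | hl
      · exact BD.indiv_first g.1.2 (wd w).2 h.1.2 (wd w').2 g.2.1 h.2.2 e' hl
      · exact (BD.indiv_first h.1.2 (wd w').2 g.1.2 (wd w).2 h.2.1 g.2.2 e'.symm hl).symm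
    have e2 := BD.juxt_cancel g.1.2 (wd w).2 h.1.2 (wd w').2 e' (by rw [e1])
    exact ⟨Subtype.ext (Subtype.ext e1), Subtype.ext e2.2⟩
  have key0 : ∀ (g : GSet) (w : FreeMonoid GSet), wd (FreeMonoid.of g * w) ≠ wd 1 := by
    intro g w e
    rw [map_mul, map_one, wd_of] at e
    have := congrArg (fun A : BDiagram => A.1.nv) e
    simp only [bmul_val, bone_val, BD.nv_juxt] at this
    have h2 := BD.nv_pos g.1.2 g.2.1
    have h3 : BD.eps.nv = 0 := rfl
    omega
  intro w
  induction w using FreeMonoid.inductionOn' with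
  | one =>
    intro w' e
    induction w' using FreeMonoid.inductionOn' with
    | one => rfl
    | of_mul h w' => exact absurd e.symm (key0 h w')
  | of_mul g w ih =>
    intro w' e
    induction w' using FreeMonoid.inductionOn' with
    | one => exact absurd e (key0 g w)
    | of_mul h w' =>
      obtain ⟨rfl, e2⟩ := key g h w w' e
      rw [ih e2]

theorem wd_surj : Function.Surjective wd := by
  have : ∀ n : ℕ, ∀ A : BDiagram, A.1.nv = n → ∃ w, wd w = A := by
    intro n
    induction n using Nat.strong_induction_on with
    | _ n ih =>
    intro A hn
    by_cases h0 : A.1 = BD.eps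
    · exact ⟨1, by rw [map_one]; exact Subtype.ext h0.symm⟩
    by_cases hi : A.1.Indiv
    · exact ⟨FreeMonoid.of ⟨A, h0, hi⟩, wd_of _⟩
    · unfold BD.Indiv at hi
      push Not at hi
      obtain ⟨G₁, G₂, h1, h2, e, n1, n2⟩ := hi
      have hs : A.1.nv = G₁.nv + G₂.nv := by rw [e, BD.nv_juxt]
      have p1 : 0 < G₁.nv := BD.nv_pos h1 fun h => n2 (by rw [e, h, BD.eps_juxt])
      have p2 : 0 < G₂.nv := BD.nv_pos h2 fun h => n1 (by rw [e, h, BD.juxt_eps])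
      obtain ⟨w1, e1⟩ := ih G₁.nv (by omega) ⟨G₁, h1⟩ rfl
      obtain ⟨w2, e2⟩ := ih G₂.nv (by omega) ⟨G₂, h2⟩ rfl
      exact ⟨w1 * w2, by rw [map_mul, e1, e2]; exact Subtype.ext e.symm⟩
  intro A
  exact this _ A rfl

/-- unique factorisation into indivisibles -/
noncomputable def wdEquiv : FreeMonoid GSet ≃* BDiagram :=
  MulEquiv.ofBijective wd ⟨wd_inj, wd_surj⟩

open scoped Classical in
/-- isolated subsets -/
noncomputable def isoS (G : BD) : Finset (Finset ℕ) :=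
  (Finset.Icc 1 G.nv).powerset.filter (fun I => G.Isolated I)

theorem mem_isoS (G : BD) (I : Finset ℕ) :
    I ∈ isoS G ↔ I ⊆ Finset.Icc 1 G.nv ∧ G.Isolated I := by
  simp [isoS]

theorem isolated_jn {G G' : BD} (hG : G.Valid) (hG' : G'.Valid) {I I' : Finset ℕ}
    (hI : I ⊆ Finset.Icc 1 G.nv) (hI' : I' ⊆ Finset.Icc 1 G'.nv) :
    (BD.juxt G G').Isolated (BD.jn G I I') ↔ G.Isolated I ∧ G'.Isolated I' := by
  have h1 : ∀ x ∈ I, x ≤ G.nv := fun x hx => (Finset.mem_Icc.1 (hI hx)).2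
  have h2 : ∀ x ∈ I', 1 ≤ x := fun x hx => (Finset.mem_Icc.1 (hI' hx)).1
  have k1 : ∀ p ∈ G.ed, ((BD.juxt G G').v p.1 ∈ BD.jn G I I' ↔ G.v p.1 ∈ I) ∧
      ((BD.juxt G G').v p.2 ∈ BD.jn G I I' ↔ G.v p.2 ∈ I) := by
    intro p hp
    have hl := hG.ed_le hp
    rw [BD.juxt, BD.v_comp_le _ _ _ hl.1.2, BD.v_comp_le _ _ _ hl.2.2,
      BD.mem_jn_left h2 (G.v_le_nv _), BD.mem_jn_left h2 (G.v_le_nv _)]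
    exact ⟨Iff.rfl, Iff.rfl⟩
  have k2 : ∀ p ∈ G'.ed, ((BD.juxt G G').v (p.1 + G.omega) ∈ BD.jn G I I' ↔ G'.v p.1 ∈ I') ∧
      ((BD.juxt G G').v (p.2 + G.omega) ∈ BD.jn G I I' ↔ G'.v p.2 ∈ I') := by
    intro p hp
    have hl := hG'.ed_le hp
    rw [BD.juxt, BD.v_comp_add _ _ _ hl.1.1 hl.1.2, BD.v_comp_add _ _ _ hl.2.1 hl.2.2,
      BD.mem_jn_right h1 (G'.v_pos hl.1.1 hl.1.2), BD.mem_jn_right h1 (G'.v_pos hl.2.1 hl.2.2)]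
    exact ⟨Iff.rfl, Iff.rfl⟩
  constructor
  · intro h
    constructor
    · intro p hp
      rw [← (k1 p hp).1, ← (k1 p hp).2]
      exact h p ((BD.mem_ed_juxt _ _ _).2 (Or.inl hp))
    · intro p hp
      rw [← (k2 p hp).1, ← (k2 p hp).2]
      exact h _ ((BD.mem_ed_juxt _ _ _).2 (Or.inr ⟨p, hp, rfl⟩))
  · rintro ⟨h, h'⟩ p hp
    rcases (BD.mem_ed_juxt _ _ _).1 hp with hp' | ⟨q, hq, rfl⟩
    · rw [(k1 p hp').1, (k1 p hp').2]; exact h p hp'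
    · rw [(k2 q hq).1, (k2 q hq).2]; exact h' q hq

theorem jn_subset {G G' : BD} {I I' : Finset ℕ}
    (hI : I ⊆ Finset.Icc 1 G.nv) (hI' : I' ⊆ Finset.Icc 1 G'.nv) :
    BD.jn G I I' ⊆ Finset.Icc 1 (BD.juxt G G').nv := by
  intro x hx
  simp only [BD.jn, Finset.mem_union, Finset.mem_image] at hx
  rw [Finset.mem_Icc, BD.nv_juxt]
  rcases hx with hx | ⟨x, hx, rfl⟩
  · have := Finset.mem_Icc.1 (hI hx); omega
  · have := Finset.mem_Icc.1 (hI' hx); omega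

theorem mem_jn {G : BD} {I I' : Finset ℕ} {x : ℕ} :
    x ∈ BD.jn G I I' ↔ x ∈ I ∨ ∃ y ∈ I', y + G.nv = x := by
  simp [BD.jn]

theorem jn_compl {G G' : BD} {I I' : Finset ℕ}
    (hI : I ⊆ Finset.Icc 1 G.nv) (hI' : I' ⊆ Finset.Icc 1 G'.nv) :
    Finset.Icc 1 (BD.juxt G G').nv \ BD.jn G I I' =
      BD.jn G (Finset.Icc 1 G.nv \ I) (Finset.Icc 1 G'.nv \ I') := by
  have h1 : ∀ x ∈ I, x ≤ G.nv := fun x hx => (Finset.mem_Icc.1 (hI hx)).2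
  have h2 : ∀ x ∈ I', 1 ≤ x := fun x hx => (Finset.mem_Icc.1 (hI' hx)).1
  ext x
  rw [Finset.mem_sdiff, Finset.mem_Icc, BD.nv_juxt]
  rcases Nat.lt_or_ge G.nv x with h | h
  · obtain ⟨y, rfl⟩ := Nat.exists_eq_add_of_lt h
    have e : G.nv + y + 1 = (y + 1) + G.nv := by ring
    rw [e, BD.mem_jn_right h1 (by omega), BD.mem_jn_right (by simp; omega) (by omega),
      Finset.mem_sdiff, Finset.mem_Icc]
    refine and_congr_left fun _ => ?_
    omega
  · rw [BD.mem_jn_left h2 h, BD.mem_jn_left (by simp; omega) h, Finset.mem_sdiff, Finset.mem_Icc]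
    refine and_congr_left fun _ => ?_
    omega

/-- sums over isolated subsets of a juxtaposition -/
theorem sum_isoS_juxt {G G' : BD} (hG : G.Valid) (hG' : G'.Valid) {M : Type*} [AddCommMonoid M]
    (f : Finset ℕ → M) :
    ∑ I ∈ isoS (BD.juxt G G'), f I =
      ∑ p ∈ isoS G ×ˢ isoS G', f (BD.jn G p.1 p.2) := by
  symm
  refine Finset.sum_nbij' (fun p => BD.jn G p.1 p.2)
    (fun I => (I.filter (· ≤ G.nv), (Finset.Icc 1 G'.nv).filter (· + G.nv ∈ I))) ?_ ?_ ?_ ?_ ?_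
  · rintro ⟨I, I'⟩ h
    simp only [Finset.mem_product, mem_isoS] at h ⊢
    exact ⟨jn_subset h.1.1 h.2.1, (isolated_jn hG hG' h.1.1 h.2.1).2 ⟨h.1.2, h.2.2⟩⟩
  · intro I hI
    rw [mem_isoS] at hI
    have s1 : I.filter (· ≤ G.nv) ⊆ Finset.Icc 1 G.nv := by
      intro x hx
      rw [Finset.mem_filter] at hx
      have := Finset.mem_Icc.1 (hI.1 hx.1)
      exact Finset.mem_Icc.2 ⟨this.1, hx.2⟩
    have s2 : (Finset.Icc 1 G'.nv).filter (· + G.nv ∈ I) ⊆ Finset.Icc 1 G'.nv :=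
      Finset.filter_subset _ _
    have e : BD.jn G (I.filter (· ≤ G.nv)) ((Finset.Icc 1 G'.nv).filter (· + G.nv ∈ I)) = I := by
      ext x
      rw [mem_jn]
      simp only [Finset.mem_filter, Finset.mem_Icc]
      constructor
      · rintro (h | ⟨y, h, rfl⟩)
        · exact h.1
        · exact h.2
      · intro h
        have h3 := Finset.mem_Icc.1 (hI.1 h)
        rw [BD.nv_juxt] at h3
        rcases Nat.lt_or_ge G.nv x with h' | h'
        · have e' : x - G.nv + G.nv = x := by omega
          exact Or.inr ⟨x - G.nv, ⟨⟨by omega, by omega⟩, by rw [e']; exact h⟩, e'⟩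
        · exact Or.inl ⟨h, h'⟩
    have := hI.2
    rw [← e] at this
    have := (isolated_jn hG hG' s1 s2).1 this
    simp only [Finset.mem_product, mem_isoS]
    exact ⟨⟨s1, this.1⟩, s2, this.2⟩
  · rintro ⟨I, I'⟩ h
    simp only [Finset.mem_product, mem_isoS] at h
    have h1 : ∀ x ∈ I, x ≤ G.nv := fun x hx => (Finset.mem_Icc.1 (h.1.1 hx)).2
    have h2 : ∀ x ∈ I', 1 ≤ x := fun x hx => (Finset.mem_Icc.1 (h.2.1 hx)).1
    simp only [Prod.mk.injEq]
    constructor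
    · ext x
      rw [Finset.mem_filter]
      constructor
      · rintro ⟨a, b⟩; exact (BD.mem_jn_left h2 b).1 a
      · intro a; exact ⟨(BD.mem_jn_left h2 (h1 x a)).2 a, h1 x a⟩
    · ext x
      rw [Finset.mem_filter]
      constructor
      · rintro ⟨a, b⟩; exact (BD.mem_jn_right h1 (Finset.mem_Icc.1 a).1).1 b
      · intro a; exact ⟨h.2.1 a, (BD.mem_jn_right h1 (h2 x a)).2 a⟩
  · intro I hI
    rw [mem_isoS] at hI
    ext x
    rw [mem_jn]
    simp only [Finset.mem_filter, Finset.mem_Icc]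
    constructor
    · rintro (h | ⟨y, h, rfl⟩)
      · exact h.1
      · exact h.2
    · intro h
      have h3 := Finset.mem_Icc.1 (hI.1 h)
      rw [BD.nv_juxt] at h3
      rcases Nat.lt_or_ge G.nv x with h' | h'
      · have e' : x - G.nv + G.nv = x := by omega
        exact Or.inr ⟨x - G.nv, ⟨⟨by omega, by omega⟩, by rw [e']; exact h⟩, e'⟩
      · exact Or.inl ⟨h, h'⟩
  · intro _ _; rfl

/-- the algebra of B-diagrams for the juxtaposition product -/
abbrev AA := MonoidAlgebra ℂ BDiagram

/-- the identification of vector spaces -/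
noncomputable def LA : AA ≃ₗ[ℂ] BSpace := MonoidAlgebra.coeffLinearEquiv ℂ

/-- basis element -/
noncomputable def mA (G : BD) : AA := LA.symm (mkB G)

theorem mkB_valid {G : BD} (h : G.Valid) : mkB G = Finsupp.single ⟨G, h⟩ 1 := by simp [mkB, h]

theorem mA_valid {G : BD} (h : G.Valid) : mA G = MonoidAlgebra.single ⟨G, h⟩ 1 := by
  unfold mA; rw [mkB_valid h]; rfl

theorem mA_val (A : BDiagram) : mA A.1 = MonoidAlgebra.of ℂ BDiagram A := mA_valid A.2

theorem mA_juxt {G G' : BD} (h : G.Valid) (h' : G'.Valid) : mA (BD.juxt G G') = mA G * mA G' := by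
  rw [mA_valid h, mA_valid h', mA_valid (BD.juxt_valid h h'), MonoidAlgebra.single_mul_single,
    one_mul]; rfl

theorem mA_eps : mA BD.eps = 1 := by
  rw [mA_valid BD.eps_valid, MonoidAlgebra.one_def]; rfl

/-- coproduct on the basis -/
noncomputable def dA (G : BD) : AA ⊗[ℂ] AA :=
  ∑ I ∈ isoS G, mA (G.sub I) ⊗ₜ[ℂ] mA (G.sub (Finset.Icc 1 G.nv \ I))

theorem dA_juxt {G G' : BD} (hG : G.Valid) (hG' : G'.Valid) :
    dA (BD.juxt G G') = dA G * dA G' := by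
  unfold dA
  rw [sum_isoS_juxt hG hG', Finset.sum_mul_sum, ← Finset.sum_product']
  refine Finset.sum_congr rfl ?_
  rintro ⟨I, I'⟩ h
  simp only [Finset.mem_product, mem_isoS] at h
  simp only
  rw [jn_compl h.1.1 h.2.1, BD.sub_juxt hG hG' h.1.1 h.2.1,
    BD.sub_juxt hG hG' Finset.sdiff_subset Finset.sdiff_subset,
    mA_juxt (BD.sub_valid hG _ h.1.1) (BD.sub_valid hG' _ h.2.1),
    mA_juxt (BD.sub_valid hG _ Finset.sdiff_subset) (BD.sub_valid hG' _ Finset.sdiff_subset),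
    Algebra.TensorProduct.tmul_mul_tmul]

theorem dA_eps : dA BD.eps = 1 := by
  have h : isoS BD.eps = {∅} := by
    ext I
    rw [mem_isoS, Finset.mem_singleton]
    constructor
    · intro h; exact Finset.subset_empty.1 h.1
    · rintro rfl; exact ⟨by simp, by simp [BD.Isolated]⟩
  unfold dA
  rw [h, Finset.sum_singleton, Finset.sdiff_empty, BD.sub_full BD.eps_valid,
    BD.sub_empty BD.eps_valid, mA_eps, Algebra.TensorProduct.one_def]

/-- the coproduct as an algebra morphism -/
noncomputable def DA : AA →ₐ[ℂ] AA ⊗[ℂ] AA :=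
  MonoidAlgebra.lift ℂ _ BDiagram
    { toFun := fun A => dA A.1
      map_one' := dA_eps
      map_mul' := fun A B => dA_juxt A.2 B.2 }

theorem DA_mA {G : BD} (h : G.Valid) : DA (mA G) = dA G := by
  have := mA_val ⟨G, h⟩
  simp only at this
  rw [this, DA, MonoidAlgebra.lift_of]; rfl

theorem liftB_single {V : Type*} [AddCommMonoid V] [Module ℂ V] (f : BDiagram → V) (A : BDiagram)
    (c : ℂ) : liftB f (Finsupp.single A c) = c • f A := by
  simp [liftB]

theorem liftB_mkB {V : Type*} [AddCommMonoid V] [Module ℂ V] (f : BDiagram → V) {G : BD}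
    (h : G.Valid) : liftB f (mkB G) = f ⟨G, h⟩ := by
  rw [mkB_valid h, liftB_single, one_smul]

theorem LA_mA (G : BD) : LA (mA G) = mkB G := by simp [mA]

theorem BSpace_ext {V : Type*} [AddCommMonoid V] [Module ℂ V] {f g : BSpace →ₗ[ℂ] V}
    (h : ∀ G : BD, G.Valid → f (mkB G) = g (mkB G)) : f = g := by
  refine Finsupp.lhom_ext' fun A => LinearMap.ext_ring ?_
  have := h A.1 A.2
  rw [mkB_valid A.2] at this
  exact this

theorem AA_ext {V : Type*} [AddCommMonoid V] [Module ℂ V] {f g : AA →ₗ[ℂ] V}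
    (h : ∀ G : BD, G.Valid → f (mA G) = g (mA G)) : f = g := by
  have : f ∘ₗ LA.symm.toLinearMap = g ∘ₗ LA.symm.toLinearMap := BSpace_ext h
  refine LinearMap.ext fun x => ?_
  have := LinearMap.congr_fun this (LA x)
  simpa using this

theorem deltaL_LA (x : AA) :
    deltaL (LA x) = TensorProduct.map LA.toLinearMap LA.toLinearMap (DA x) := by
  have : deltaL ∘ₗ LA.toLinearMap =
      TensorProduct.map LA.toLinearMap LA.toLinearMap ∘ₗ DA.toLinearMap := by
    refine AA_ext fun G h => ?_
    simp only [LinearMap.comp_apply, LinearEquiv.coe_coe, AlgHom.toLinearMap_apply]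
    rw [LA_mA, deltaL, liftB_mkB _ h, DA_mA h]
    unfold dfun dA
    rw [map_sum]
    refine Finset.sum_congr rfl fun I _ => ?_
    rw [TensorProduct.map_tmul]
    simp only [LinearEquiv.coe_coe, LA_mA]
  exact LinearMap.congr_fun this x

section recursion

variable (S : Finset (Finset ℕ)) (F : Finset ℕ → AA) (m : ℕ)

open scoped Classical in
/-- recursive definition of primitive elements -/
noncomputable def PP (I : Finset ℕ) : AA :=
  F I - ∑ B ∈ (S.filter (fun B => B ⊂ I ∧ m ∈ B)).attach, PP B.1 * F (I \ B.1)
termination_by I.card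
decreasing_by exact Finset.card_lt_card (Finset.mem_filter.1 B.2).2.1

open scoped Classical in
theorem PP_eq (I : Finset ℕ) :
    PP S F m I = F I - ∑ B ∈ S.filter (fun B => B ⊂ I ∧ m ∈ B), PP S F m B * F (I \ B) := by
  rw [PP]
  congr 1
  exact Finset.sum_attach _ (fun B => PP S F m B * F (I \ B))

open scoped Classical in
theorem sum_split {M : Type*} [AddCommMonoid M] (f : Finset ℕ → M) {I : Finset ℕ} (hI : I ∈ S)
    (hm : m ∈ I) : ∑ B ∈ S.filter (fun B => B ⊆ I ∧ m ∈ B), f B =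
      f I + ∑ B ∈ S.filter (fun B => B ⊂ I ∧ m ∈ B), f B := by
  have : S.filter (fun B => B ⊆ I ∧ m ∈ B) =
      insert I (S.filter (fun B => B ⊂ I ∧ m ∈ B)) := by
    ext B
    simp only [Finset.mem_filter, Finset.mem_insert]
    constructor
    · rintro ⟨h1, h2, h3⟩
      rcases h2.eq_or_ssubset with h | h
      · exact Or.inl h
      · exact Or.inr ⟨h1, h, h3⟩
    · rintro (rfl | ⟨h1, h2, h3⟩)
      · exact ⟨hI, subset_rfl, hm⟩
      · exact ⟨h1, h2.subset, h3⟩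
  rw [this, Finset.sum_insert]
  simp [ssubset_irrefl]

open scoped Classical in
theorem PP_sum (h0 : F ∅ = 1) {I : Finset ℕ} (hI : I ∈ S) (hm : m ∈ I) :
    ∑ B ∈ S.filter (fun B => B ⊆ I ∧ m ∈ B), PP S F m B * F (I \ B) = F I := by
  rw [sum_split S m _ hI hm, Finset.sdiff_self, h0, mul_one, PP_eq]
  abel

open scoped Classical in
theorem PP_prim (h0 : F ∅ = 1) (hd : ∀ I ∈ S, ∀ J ∈ S, I \ J ∈ S) (hu : ∀ I ∈ S, ∀ J ∈ S, I ∪ J ∈ S)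
    (hF : ∀ I ∈ S, DA (F I) = ∑ J ∈ S.filter (fun J => J ⊆ I), F J ⊗ₜ[ℂ] F (I \ J))
    {I : Finset ℕ} (hI : I ∈ S) (hm : m ∈ I) :
    DA (PP S F m I) = PP S F m I ⊗ₜ[ℂ] 1 + 1 ⊗ₜ[ℂ] PP S F m I := by
  induction hn : I.card using Nat.strong_induction_on generalizing I with
  | _ n ih =>
  subst hn
  set P := PP S F m with hP
  have key1 : ∑ B ∈ S.filter (fun B => B ⊆ I ∧ m ∈ B), (P B ⊗ₜ[ℂ] (1 : AA)) * DA (F (I \ B)) =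
      ∑ J ∈ S.filter (fun J => J ⊆ I ∧ m ∈ J), F J ⊗ₜ[ℂ] F (I \ J) := by
    have e1 : ∀ B ∈ S.filter (fun B => B ⊆ I ∧ m ∈ B), (P B ⊗ₜ[ℂ] (1 : AA)) * DA (F (I \ B)) =
        ∑ K ∈ S.filter (fun J => J ⊆ I \ B), (P B * F K) ⊗ₜ[ℂ] F ((I \ B) \ K) := by
      intro B hB
      rw [hF _ (hd I hI B (Finset.mem_filter.1 hB).1), Finset.mul_sum]
      simp [Algebra.TensorProduct.tmul_mul_tmul]
    have e2 : ∀ J ∈ S.filter (fun J => J ⊆ I ∧ m ∈ J), F J ⊗ₜ[ℂ] F (I \ J) =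
        ∑ B ∈ S.filter (fun B => B ⊆ J ∧ m ∈ B), (P B * F (J \ B)) ⊗ₜ[ℂ] F (I \ J) := by
      intro J hJ
      have hJ := Finset.mem_filter.1 hJ
      rw [← TensorProduct.sum_tmul, PP_sum S F m h0 hJ.1 hJ.2.2]
    rw [Finset.sum_congr rfl e1, Finset.sum_congr rfl e2, Finset.sum_sigma', Finset.sum_sigma']
    refine Finset.sum_bij' (fun x _ => ⟨x.1 ∪ x.2, x.1⟩) (fun x _ => ⟨x.2, x.1 \ x.2⟩)
      ?_ ?_ ?_ ?_ ?_
    · rintro ⟨B, K⟩ h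
      simp only [Finset.mem_sigma, Finset.mem_filter] at h ⊢
      exact ⟨⟨hu _ h.1.1 _ h.2.1, Finset.union_subset h.1.2.1 (h.2.2.trans Finset.sdiff_subset),
        Finset.mem_union_left _ h.1.2.2⟩, h.1.1, Finset.subset_union_left, h.1.2.2⟩
    · rintro ⟨J, B⟩ h
      simp only [Finset.mem_sigma, Finset.mem_filter] at h ⊢
      exact ⟨⟨h.2.1, h.2.2.1.trans h.1.2.1, h.2.2.2⟩, hd _ h.1.1 _ h.2.1,
        Finset.sdiff_subset_sdiff h.1.2.1 subset_rfl⟩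
    · rintro ⟨B, K⟩ h
      simp only [Finset.mem_sigma, Finset.mem_filter] at h
      have : (B ∪ K) \ B = K := by
        rw [Finset.union_sdiff_cancel_left]
        exact (Finset.disjoint_of_subset_left h.2.2 Finset.sdiff_disjoint).symm
      simp [this]
    · rintro ⟨J, B⟩ h
      simp only [Finset.mem_sigma, Finset.mem_filter] at h
      simp [Finset.union_sdiff_of_subset h.2.2.1]
    · rintro ⟨B, K⟩ h
      simp only [Finset.mem_sigma, Finset.mem_filter] at h
      have : (B ∪ K) \ B = K := by
        rw [Finset.union_sdiff_cancel_left]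
        exact (Finset.disjoint_of_subset_left h.2.2 Finset.sdiff_disjoint).symm
      simp only [this, Finset.sdiff_sdiff_left']
      rw [Finset.sdiff_union_distrib]
  have key2 : ∑ B ∈ S.filter (fun B => B ⊆ I ∧ m ∈ B), ((1 : AA) ⊗ₜ[ℂ] P B) * DA (F (I \ B)) =
      ∑ J ∈ S.filter (fun J => J ⊆ I ∧ ¬ m ∈ J), F J ⊗ₜ[ℂ] F (I \ J) := by
    have e1 : ∀ B ∈ S.filter (fun B => B ⊆ I ∧ m ∈ B), ((1 : AA) ⊗ₜ[ℂ] P B) * DA (F (I \ B)) =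
        ∑ K ∈ S.filter (fun J => J ⊆ I \ B), F K ⊗ₜ[ℂ] (P B * F ((I \ B) \ K)) := by
      intro B hB
      rw [hF _ (hd I hI B (Finset.mem_filter.1 hB).1), Finset.mul_sum]
      simp [Algebra.TensorProduct.tmul_mul_tmul]
    have e2 : ∀ J ∈ S.filter (fun J => J ⊆ I ∧ ¬ m ∈ J), F J ⊗ₜ[ℂ] F (I \ J) =
        ∑ B ∈ S.filter (fun B => B ⊆ I \ J ∧ m ∈ B), F J ⊗ₜ[ℂ] (P B * F ((I \ J) \ B)) := by
      intro J hJ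
      have hJ := Finset.mem_filter.1 hJ
      rw [← TensorProduct.tmul_sum, PP_sum S F m h0 (hd I hI J hJ.1)
        (Finset.mem_sdiff.2 ⟨hm, hJ.2.2⟩)]
    rw [Finset.sum_congr rfl e1, Finset.sum_congr rfl e2]
    refine Finset.sum_comm' ?_ |>.trans (Finset.sum_congr rfl fun J _ =>
      Finset.sum_congr rfl fun B _ => ?_)
    · intro B K
      simp only [Finset.mem_filter, Finset.subset_sdiff]
      constructor
      · rintro ⟨⟨a, b, c⟩, d, e, f⟩
        exact ⟨⟨a, ⟨b, f.symm⟩, c⟩, d, e, fun h => Finset.disjoint_left.1 f h c⟩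
      · rintro ⟨⟨a, ⟨b, f⟩, c⟩, d, e, g⟩
        exact ⟨⟨a, b, c⟩, d, e, f.symm⟩
    · rw [sdiff_right_comm]
  have tot : ∑ B ∈ S.filter (fun B => B ⊆ I ∧ m ∈ B),
      (P B ⊗ₜ[ℂ] (1 : AA) + (1 : AA) ⊗ₜ[ℂ] P B) * DA (F (I \ B)) = DA (F I) := by
    simp only [add_mul, Finset.sum_add_distrib]
    rw [key1, key2, hF I hI, ← Finset.filter_filter, ← Finset.filter_filter,
      Finset.sum_filter_add_sum_filter_not]
  rw [sum_split S m _ hI hm, Finset.sdiff_self, h0, map_one, mul_one] at tot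
  have e3 : DA (P I) = DA (F I) - ∑ B ∈ S.filter (fun B => B ⊂ I ∧ m ∈ B),
      (P B ⊗ₜ[ℂ] (1 : AA) + (1 : AA) ⊗ₜ[ℂ] P B) * DA (F (I \ B)) := by
    rw [hP, PP_eq, map_sub, map_sum]
    congr 1
    refine Finset.sum_congr rfl fun B hB => ?_
    have hB := Finset.mem_filter.1 hB
    rw [map_mul, ih B.card (Finset.card_lt_card hB.2.1) hB.1 hB.2.2 rfl]
  rw [e3, ← tot]
  abel

end recursion

namespace BD

theorem sub_sub {G : BD} (hG : G.Valid) {I J : Finset ℕ} (hI : I ⊆ Finset.Icc 1 G.nv)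
    (hJ : J ⊆ I) : (G.sub I).sub (J.image (rk I)) = G.sub J := by
  have h := sub_rel G I hI
  have hs : J.image (rk I) ⊆ Finset.Icc 1 (G.sub I).nv := by
    rw [← h.pimg]; exact Finset.image_subset_image hJ
  exact ((h.trans hG hJ (sub_rel (G.sub I) _ hs)).eq_sub hG).symm

theorem isolated_sub {G : BD} (hG : G.Valid) {I J : Finset ℕ} (hI : I ⊆ Finset.Icc 1 G.nv)
    (hJ : J ⊆ I) (hiso : G.Isolated I) :
    (G.sub I).Isolated (J.image (rk I)) ↔ G.Isolated J := by
  have h := sub_rel G I hI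
  have hmem : ∀ q, (q ∈ G.HI I) → ((G.sub I).v (G.phi I q) ∈ J.image (rk I) ↔ G.v q ∈ J) := by
    intro q hq'
    have hq := ((mem_HI _ _ _).1 hq').2
    rw [h.hv q hq', Finset.mem_image]
    constructor
    · rintro ⟨j, hj, e⟩; rw [← h.pmono.injOn (hJ hj) hq e]; exact hj
    · exact fun hj => ⟨_, hj, rfl⟩
  constructor
  · intro hi p hp
    by_cases hv : G.v p.1 ∈ I
    · have hv2 := (hiso p hp).1 hv
      have hh := hG.ed_HI hp I
      have := hi (G.phi I p.1, G.phi I p.2) (by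
        rw [h.hed]
        exact Finset.mem_image.2 ⟨p, Finset.mem_filter.2 ⟨hp, hv, hv2⟩, rfl⟩)
      simp only at this
      rwa [hmem _ (hh.1.2 hv), hmem _ (hh.2.2 hv2)] at this
    · have hv2 := fun h' => hv ((hiso p hp).2 h')
      exact ⟨fun h' => absurd (hJ h') hv, fun h' => absurd (hJ h') hv2⟩
  · intro hi p hp
    rw [h.hed, Finset.mem_image] at hp
    obtain ⟨q, hq, rfl⟩ := hp
    have hq := Finset.mem_filter.1 hq
    have hh := hG.ed_HI hq.1 I
    simp only
    rw [hmem _ (hh.1.2 hq.2.1), hmem _ (hh.2.2 hq.2.2)]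
    exact hi q hq.1

end BD

theorem isoS_sdiff {G : BD} {I J : Finset ℕ} (hI : I ∈ isoS G) (hJ : J ∈ isoS G) :
    I \ J ∈ isoS G := by
  rw [mem_isoS] at *
  refine ⟨Finset.sdiff_subset.trans hI.1, fun p hp => ?_⟩
  rw [Finset.mem_sdiff, Finset.mem_sdiff, hI.2 p hp, hJ.2 p hp]

theorem isoS_union {G : BD} {I J : Finset ℕ} (hI : I ∈ isoS G) (hJ : J ∈ isoS G) :
    I ∪ J ∈ isoS G := by
  rw [mem_isoS] at *
  refine ⟨Finset.union_subset hI.1 hJ.1, fun p hp => ?_⟩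
  rw [Finset.mem_union, Finset.mem_union, hI.2 p hp, hJ.2 p hp]

theorem isoS_full {G : BD} (hG : G.Valid) : Finset.Icc 1 G.nv ∈ isoS G := by
  rw [mem_isoS]
  refine ⟨subset_rfl, fun p hp => ?_⟩
  simp only [G.v_mem (hG.ed_mem hp).1, G.v_mem (hG.ed_mem hp).2]

open scoped Classical in
theorem DA_sub {G : BD} (hG : G.Valid) {I : Finset ℕ} (hI : I ∈ isoS G) :
    DA (mA (G.sub I)) =
      ∑ J ∈ (isoS G).filter (fun J => J ⊆ I), mA (G.sub J) ⊗ₜ[ℂ] mA (G.sub (I \ J)) := by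
  rw [mem_isoS] at hI
  have h := BD.sub_rel G I hI.1
  rw [DA_mA (BD.sub_valid hG I hI.1)]
  unfold dA
  symm
  have inj : ∀ J, J ⊆ I → I.filter (fun x => BD.rk I x ∈ J.image (BD.rk I)) = J := by
    intro J hJ
    ext x
    simp only [Finset.mem_filter, Finset.mem_image]
    constructor
    · rintro ⟨hx, y, hy, e⟩; rw [← h.pmono.injOn (hJ hy) hx e]; exact hy
    · intro hx; exact ⟨hJ hx, x, hx, rfl⟩
  have surj : ∀ K, K ⊆ Finset.Icc 1 (G.sub I).nv →
      (I.filter (fun x => BD.rk I x ∈ K)).image (BD.rk I) = K := by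
    intro K hK
    ext y
    simp only [Finset.mem_image, Finset.mem_filter]
    constructor
    · rintro ⟨x, hx, rfl⟩; exact hx.2
    · intro hy
      have := hK hy
      rw [← h.pimg, Finset.mem_image] at this
      obtain ⟨x, hx, rfl⟩ := this
      exact ⟨x, ⟨hx, hy⟩, rfl⟩
  have cmp : ∀ J, J ⊆ I → Finset.Icc 1 (G.sub I).nv \ J.image (BD.rk I) =
      (I \ J).image (BD.rk I) := by
    intro J hJ
    rw [← h.pimg]
    ext y
    simp only [Finset.mem_sdiff, Finset.mem_image]
    constructor
    · rintro ⟨⟨x, hx, rfl⟩, h2⟩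
      exact ⟨x, ⟨hx, fun h3 => h2 ⟨x, h3, rfl⟩⟩, rfl⟩
    · rintro ⟨x, ⟨hx, hxJ⟩, rfl⟩
      refine ⟨⟨x, hx, rfl⟩, ?_⟩
      rintro ⟨z, hz, e⟩
      exact hxJ (h.pmono.injOn (hJ hz) hx e ▸ hz)
  refine Finset.sum_bij' (fun J _ => J.image (BD.rk I))
    (fun K _ => I.filter (fun x => BD.rk I x ∈ K)) ?_ ?_ ?_ ?_ ?_
  · intro J hJ
    rw [Finset.mem_filter, mem_isoS] at hJ
    rw [mem_isoS, BD.isolated_sub hG hI.1 hJ.2 hI.2]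
    refine ⟨?_, hJ.1.2⟩
    rw [← h.pimg]; exact Finset.image_subset_image hJ.2
  · intro K hK
    rw [mem_isoS] at hK
    have hs : I.filter (fun x => BD.rk I x ∈ K) ⊆ I := Finset.filter_subset _ _
    rw [Finset.mem_filter, mem_isoS, ← BD.isolated_sub hG hI.1 hs hI.2, surj K hK.1]
    exact ⟨⟨hs.trans hI.1, hK.2⟩, hs⟩
  · intro J hJ
    exact inj J (Finset.mem_filter.1 hJ).2
  · intro K hK
    exact surj K ((mem_isoS _ _).1 hK).1
  · intro J hJ
    have hJ := (Finset.mem_filter.1 hJ).2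
    rw [cmp J hJ, BD.sub_sub hG hI.1 hJ, BD.sub_sub hG hI.1 Finset.sdiff_subset]

/-- the primitive element attached to a diagram -/
noncomputable def pg (G : BD) : AA :=
  PP (isoS G) (fun I => mA (G.sub I)) 1 (Finset.Icc 1 G.nv)

theorem pg_prim {G : BD} (hG : G.Valid) (h0 : G ≠ BD.eps) :
    DA (pg G) = pg G ⊗ₜ[ℂ] 1 + 1 ⊗ₜ[ℂ] pg G := by
  classical
  refine PP_prim (isoS G) _ 1 ?_ (fun I hI J hJ => isoS_sdiff hI hJ)
    (fun I hI J hJ => isoS_union hI hJ) ?_ (isoS_full hG) ?_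
  · simp only [BD.sub_empty hG, mA_eps]
  · intro I hI
    convert DA_sub hG hI
  · rw [Finset.mem_Icc]; have := BD.nv_pos hG h0; omega

theorem tri_bij {ι V : Type*} [AddCommGroup V] [Module ℂ V] (b : Module.Basis ι ℂ V) (ρ : ι → ℕ)
    (u : V →ₗ[ℂ] V)
    (h : ∀ i, u (b i) - b i ∈ Submodule.span ℂ {x | ∃ j, x = b j ∧ ρ j < ρ i}) :
    Function.Bijective u := by
  set Vk : ℕ → Submodule ℂ V := fun k => Submodule.span ℂ {x | ∃ j, x = b j ∧ ρ j < k} with hVk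
  have mono : Monotone Vk := by
    intro k l hkl
    refine Submodule.span_mono ?_
    rintro x ⟨j, e, hj⟩
    exact ⟨j, e, by omega⟩
  have all : ∀ x : V, ∃ k, x ∈ Vk k := by
    intro x
    have hx : x ∈ Submodule.span ℂ (Set.range b) := by rw [b.span_eq]; trivial
    induction hx using Submodule.span_induction with
    | mem x hx =>
      obtain ⟨j, rfl⟩ := hx
      exact ⟨ρ j + 1, Submodule.subset_span ⟨j, rfl, by omega⟩⟩
    | zero => exact ⟨0, zero_mem _⟩
    | add x y _ _ hx hy =>
      obtain ⟨k, hk⟩ := hx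
      obtain ⟨l, hl⟩ := hy
      exact ⟨max k l, add_mem (mono (le_max_left _ _) hk) (mono (le_max_right _ _) hl)⟩
    | smul c x _ hx =>
      obtain ⟨k, hk⟩ := hx
      exact ⟨k, Submodule.smul_mem _ _ hk⟩
  have step : ∀ k, ∀ x ∈ Vk (k + 1), u x - x ∈ Vk k := by
    intro k x hx
    induction hx using Submodule.span_induction with
    | mem x hx =>
      obtain ⟨j, rfl, hj⟩ := hx
      exact mono (show ρ j ≤ k by omega) (h j)
    | zero => simp
    | add x y _ _ hx hy =>
      have : u (x + y) - (x + y) = (u x - x) + (u y - y) := by rw [map_add]; abel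
      rw [this]; exact add_mem hx hy
    | smul c x _ hx =>
      have : u (c • x) - c • x = c • (u x - x) := by rw [map_smul, smul_sub]
      rw [this]; exact Submodule.smul_mem _ _ hx
  have z0 : ∀ x ∈ Vk 0, x = 0 := by
    intro x hx
    have : {x | ∃ j, x = b j ∧ ρ j < 0} = (∅ : Set V) := by
      ext x; simp
    simpa [hVk, this] using hx
  constructor
  · rw [← LinearMap.ker_eq_bot, LinearMap.ker_eq_bot']
    intro x hx
    obtain ⟨k, hk⟩ := all x
    induction k with
    | zero => exact z0 x hk
    | succ k ih =>
      have := step k x hk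
      rw [hx, zero_sub] at this
      exact ih (by simpa using neg_mem this)
  · have : ∀ k, ∀ x ∈ Vk k, x ∈ LinearMap.range u := by
      intro k
      induction k with
      | zero => intro x hx; rw [z0 x hx]; exact zero_mem _
      | succ k ih =>
        intro x hx
        have h1 := ih _ (step k x hx)
        have h2 : x = u x - (u x - x) := by abel
        rw [h2]
        exact sub_mem (LinearMap.mem_range_self u x) h1
    intro x
    obtain ⟨k, hk⟩ := all x
    exact this k x hk

/-- basis of the algebra -/
noncomputable def bA : Module.Basis BDiagram ℂ AA := Module.Basis.ofRepr LA

theorem bA_apply (A : BDiagram) : bA A = mA A.1 := by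
  rw [mA, mkB_valid A.2]; rfl

/-- number of indivisible factors -/
noncomputable def len (A : BDiagram) : ℕ := (wdEquiv.symm A).length

theorem len_mul (A B : BDiagram) : len (A * B) = len A + len B := by
  simp [len, FreeMonoid.length_mul]

theorem len_wd (w : FreeMonoid GSet) : len (wd w) = w.length := by
  unfold len
  congr 1
  exact wdEquiv.symm_apply_apply w

theorem len_le (A : BDiagram) : len A ≤ A.1.nv := by
  obtain ⟨w, rfl⟩ := wd_surj A
  rw [len_wd]
  induction w using FreeMonoid.inductionOn' with
  | one => simp
  | of_mul g w ih =>
    rw [map_mul, wd_of, bmul_val, BD.nv_juxt, FreeMonoid.length_mul, FreeMonoid.length_of]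
    have := BD.nv_pos g.1.2 g.2.1
    omega

theorem len_pos (A : BDiagram) (h : 0 < A.1.nv) : 1 ≤ len A := by
  obtain ⟨w, rfl⟩ := wd_surj A
  rw [len_wd]
  by_contra hc
  have : w.length = 0 := by omega
  rw [FreeMonoid.length_eq_zero] at this
  subst this
  rw [map_one, bone_val] at h
  exact absurd h (by simp [BD.nv, BD.eps])

/-- span of diagrams with given number of vertices and at least `k` factors -/
noncomputable def WW (n k : ℕ) : Submodule ℂ AA :=
  Submodule.span ℂ {x | ∃ A : BDiagram, x = mA A.1 ∧ A.1.nv = n ∧ k ≤ len A}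

theorem WW_mul {n k n' k' : ℕ} {x y : AA} (hx : x ∈ WW n k) (hy : y ∈ WW n' k') :
    x * y ∈ WW (n + n') (k + k') := by
  have := Submodule.mul_mem_mul hx hy
  unfold WW at this
  rw [Submodule.span_mul_span] at this
  refine Submodule.span_mono ?_ this
  rintro _ ⟨_, ⟨A, rfl, hA, hA'⟩, _, ⟨B, rfl, hB, hB'⟩, rfl⟩
  refine ⟨A * B, ?_, ?_, ?_⟩
  · simp only [bmul_val, mA_juxt A.2 B.2]
  · rw [bmul_val, BD.nv_juxt, hA, hB]
  · rw [len_mul]; omega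

theorem WW_mono {n k k' : ℕ} (h : k ≤ k') : WW n k' ≤ WW n k := by
  refine Submodule.span_mono ?_
  rintro x ⟨A, e, h1, h2⟩
  exact ⟨A, e, h1, h.trans h2⟩

theorem mA_mem_WW {G : BD} (hG : G.Valid) (h0 : 0 < G.nv) : mA G ∈ WW G.nv 1 :=
  Submodule.subset_span ⟨⟨G, hG⟩, rfl, rfl, len_pos _ h0⟩

theorem PP_mem {G : BD} (hG : G.Valid) {I : Finset ℕ} (hI : I ∈ isoS G) (hm : 1 ∈ I) :
    PP (isoS G) (fun I => mA (G.sub I)) 1 I - mA (G.sub I) ∈ WW I.card 2 ∧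
    PP (isoS G) (fun I => mA (G.sub I)) 1 I ∈ WW I.card 1 := by
  classical
  induction hn : I.card using Nat.strong_induction_on generalizing I with
  | _ n ih =>
  subst hn
  have hF : ∀ J ∈ isoS G, J.Nonempty → mA (G.sub J) ∈ WW J.card 1 := by
    intro J hJ hne
    have hJ' := ((mem_isoS _ _).1 hJ).1
    have := mA_mem_WW (BD.sub_valid hG J hJ')
      (by rw [BD.nv_sub _ _ hJ']; exact Finset.card_pos.2 hne)
    rwa [BD.nv_sub _ _ hJ'] at this
  have h1 : PP (isoS G) (fun I => mA (G.sub I)) 1 I - mA (G.sub I) ∈ WW I.card 2 := by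
    rw [PP_eq, sub_sub_cancel_left]
    refine neg_mem (Submodule.sum_mem _ fun B hB => ?_)
    have hB := Finset.mem_filter.1 hB
    have hc : I.card = B.card + (I \ B).card := by
      rw [Finset.card_sdiff_of_subset hB.2.1.subset]
      have := Finset.card_le_card hB.2.1.subset
      omega
    rw [hc]
    refine WW_mul (k := 1) (k' := 1)
      (ih B.card (Finset.card_lt_card hB.2.1) hB.1 hB.2.2 rfl).2 (hF _ (isoS_sdiff hI hB.1) ?_)
    exact Finset.sdiff_nonempty.2 hB.2.1.2
  refine ⟨h1, ?_⟩
  have h2 := add_mem (WW_mono (by norm_num) h1) (hF I hI ⟨1, hm⟩)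
  rwa [sub_add_cancel] at h2

theorem pg_mem {G : BD} (hG : G.Valid) (h0 : G ≠ BD.eps) :
    pg G - mA G ∈ WW G.nv 2 ∧ pg G ∈ WW G.nv 1 := by
  have := PP_mem hG (isoS_full hG) (by rw [Finset.mem_Icc]; have := BD.nv_pos hG h0; omega)
  rw [BD.sub_full hG, Nat.card_Icc, Nat.add_sub_cancel] at this
  exact this

/-- product of primitive elements along a word -/
noncomputable def Pw : FreeMonoid GSet →* AA := FreeMonoid.lift fun g => pg g.1.1

theorem Pw_mem (w : FreeMonoid GSet) :
    Pw w - mA (wd w).1 ∈ WW (wd w).1.nv (w.length + 1) ∧ Pw w ∈ WW (wd w).1.nv w.length := by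
  induction w using FreeMonoid.inductionOn' with
  | one =>
    rw [map_one, map_one, bone_val, mA_eps, sub_self]
    refine ⟨zero_mem _, ?_⟩
    rw [← mA_eps]
    exact Submodule.subset_span ⟨1, rfl, rfl, by simp⟩
  | of_mul g w ih =>
    have hp := pg_mem g.1.2 g.2.1
    have e : Pw (FreeMonoid.of g * w) = pg g.1.1 * Pw w := by
      rw [map_mul]; congr 1
    rw [e, map_mul, wd_of, bmul_val, BD.nv_juxt, FreeMonoid.length_mul, FreeMonoid.length_of,
      mA_juxt g.1.2 (wd w).2]
    constructor
    · have e2 : pg g.1.1 * Pw w - mA g.1.1 * mA (wd w).1 =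
        (pg g.1.1 - mA g.1.1) * Pw w + mA g.1.1 * (Pw w - mA (wd w).1) := by
        rw [sub_mul, mul_sub]; abel
      rw [e2]
      refine add_mem ?_ ?_
      · have := WW_mul hp.1 ih.2
        rwa [show 1 + w.length + 1 = 2 + w.length by ring]
      · have := WW_mul (mA_mem_WW g.1.2 (BD.nv_pos g.1.2 g.2.1)) ih.1
        rwa [show 1 + w.length + 1 = 1 + (w.length + 1) by ring]
    · exact WW_mul hp.2 ih.2

/-- the morphism from the free algebra -/
noncomputable def Phi : FreeAlgebra ℂ GSet →ₐ[ℂ] AA := FreeAlgebra.lift ℂ fun g => pg g.1.1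

/-- identification of the juxtaposition algebra with the free algebra -/
noncomputable def e0 : FreeAlgebra ℂ GSet ≃ₐ[ℂ] AA :=
  FreeAlgebra.equivMonoidAlgebraFreeMonoid.trans (MonoidAlgebra.domCongr ℂ ℂ wdEquiv)

theorem e0_ι (g : GSet) : e0 (FreeAlgebra.ι ℂ g) = mA g.1.1 := by
  have : FreeAlgebra.equivMonoidAlgebraFreeMonoid (R := ℂ) (FreeAlgebra.ι ℂ g) =
      MonoidAlgebra.single (FreeMonoid.of g) 1 := by
    simp [FreeAlgebra.equivMonoidAlgebraFreeMonoid]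
  unfold e0
  rw [AlgEquiv.trans_apply, this, mA_valid g.1.2]
  have h2 : wdEquiv (FreeMonoid.of g) = g.1 := wd_of g
  simp [h2]

theorem Phi_bij : Function.Bijective Phi := by
  set u : AA →ₗ[ℂ] AA := Phi.toLinearMap ∘ₗ e0.symm.toLinearMap with hu
  have hw : ∀ w : FreeMonoid GSet, u (mA (wd w).1) = Pw w := by
    intro w
    have e1 : mA (wd w).1 = e0 (FreeMonoid.lift (FreeAlgebra.ι ℂ) w) := by
      induction w using FreeMonoid.inductionOn' with
      | one => simp [bone_val, mA_eps]
      | of_mul g w ih =>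
        rw [map_mul, map_mul, map_mul, wd_of, bmul_val, mA_juxt g.1.2 (wd w).2, ih,
          FreeMonoid.lift_eval_of, e0_ι]
    have e2 : Phi (FreeMonoid.lift (FreeAlgebra.ι ℂ) w) = Pw w := by
      clear e1
      induction w using FreeMonoid.inductionOn' with
      | one => simp
      | of_mul g w ih =>
        have h1 : Phi (FreeAlgebra.ι ℂ g) = Pw (FreeMonoid.of g) := by
          rw [Phi, FreeAlgebra.lift_ι_apply, Pw, FreeMonoid.lift_eval_of]
        rw [map_mul, map_mul, map_mul, ih, FreeMonoid.lift_eval_of, h1]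
    rw [e1, hu]
    simp [e2]
  have hb : Function.Bijective u := by
    refine tri_bij bA (fun A => A.1.nv - len A) u fun A => ?_
    obtain ⟨w, rfl⟩ := wd_surj A
    rw [bA_apply, hw]
    refine Submodule.span_mono ?_ (Pw_mem w).1
    rintro x ⟨B, e, h1, h2⟩
    refine ⟨B, by rw [bA_apply]; exact e, ?_⟩
    have := len_le B
    simp only [h1, len_wd]
    omega
  have : (Phi : FreeAlgebra ℂ GSet → AA) = u ∘ e0 := by
    funext x; simp [hu]
  rw [this]
  exact hb.comp e0.bijective

theorem Phi_del (x : FreeAlgebra ℂ GSet) :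
    DA (Phi x) = Algebra.TensorProduct.map Phi Phi (FLA.del GSet x) := by
  have : DA.comp Phi = (Algebra.TensorProduct.map Phi Phi).comp (FLA.del GSet) := by
    apply FreeAlgebra.hom_ext
    funext g
    simp only [Function.comp_apply, AlgHom.comp_apply]
    rw [Phi, FreeAlgebra.lift_ι_apply, pg_prim g.1.2 g.2.1]
    simp [FLA.del]
  exact DFunLike.congr_fun this x

namespace BD

/-- change the set of edges -/
def we (G : BD) (E : Finset (ℕ × ℕ)) : BD := ⟨G.lam, G.up, G.dn, E⟩

open scoped Classical in
/-- edge sets extending the given one -/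
noncomputable def extS (G : BD) : Finset (Finset (ℕ × ℕ)) :=
  (G.up ×ˢ G.dn).powerset.filter (fun E => G.ed ⊆ E ∧ (we G E).Valid)

theorem Valid.ed_sub {G : BD} (h : G.Valid) : G.ed ⊆ G.up ×ˢ G.dn := fun p hp =>
  Finset.mem_product.2 ⟨(h.2.2.2.1 p hp).1, (h.2.2.2.1 p hp).2.1⟩

theorem mem_extS (G : BD) (E) : E ∈ extS G ↔ G.ed ⊆ E ∧ (we G E).Valid := by
  simp only [extS, Finset.mem_filter, Finset.mem_powerset]
  exact ⟨fun h => h.2, fun h => ⟨h.2.ed_sub, h⟩⟩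

theorem comp_we (G G' : BD) (E1 E2 s : Finset (ℕ × ℕ)) :
    comp (we G E1) (we G' E2) s = we (juxt G G') (comp (we G E1) (we G' E2) s).ed := rfl

end BD

/-- the sum of all extensions -/
noncomputable def Ufun (G : BD) : BSpace := ∑ E ∈ BD.extS G, mkB (BD.we G E)

/-- the linear map completing diagrams in all possible ways -/
noncomputable def UL : BSpace →ₗ[ℂ] BSpace := liftB fun A => Ufun A.1

theorem UL_mkB {G : BD} (h : G.Valid) : UL (mkB G) = Ufun G := liftB_mkB _ h

theorem starB_mkB {G G' : BD} (h : G.Valid) (h' : G'.Valid) :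
    starB (mkB G) (mkB G') = ∑ s ∈ BD.matchings G G', mkB (BD.comp G G' s) := by
  rw [starB, liftB_mkB _ h, liftB_mkB _ h']; rfl

theorem mem_matchings (G G' : BD) (s) : s ∈ BD.matchings G G' ↔ BD.Matching G G' s := by
  simp only [BD.matchings, Finset.mem_filter, Finset.mem_powerset]
  refine ⟨fun h => h.2, fun h => ⟨fun p hp => ?_, h⟩⟩
  exact Finset.mem_product.2 (h.1 p hp)

namespace BD

/-- edges on the left factor -/
def lE (G : BD) (E : Finset (ℕ × ℕ)) : Finset (ℕ × ℕ) :=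
  E.filter fun p => p.1 ≤ G.omega ∧ p.2 ≤ G.omega
/-- edges on the right factor -/
def rE (G G' : BD) (E : Finset (ℕ × ℕ)) : Finset (ℕ × ℕ) :=
  (G'.up ×ˢ G'.dn).filter fun p => (p.1 + G.omega, p.2 + G.omega) ∈ E
/-- edges between the factors -/
def mE (G G' : BD) (E : Finset (ℕ × ℕ)) : Finset (ℕ × ℕ) :=
  (G.up ×ˢ G'.dn).filter fun p => (p.1, p.2 + G.omega) ∈ E

theorem up_juxt_le {G G' : BD} (hG' : G'.Valid) {k : ℕ}
    (h : k ∈ (juxt G G').up) (hk : k ≤ G.omega) : k ∈ G.up := by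
  rcases (mem_up_comp G G' ∅ _).1 h with h1 | ⟨q, h2, rfl⟩
  · exact h1
  · have := hG'.up_le h2; omega
theorem dn_juxt_le {G G' : BD} (hG' : G'.Valid) {k : ℕ}
    (h : k ∈ (juxt G G').dn) (hk : k ≤ G.omega) : k ∈ G.dn := by
  rcases (mem_dn_comp G G' ∅ _).1 h with h1 | ⟨q, h2, rfl⟩
  · exact h1
  · have := hG'.dn_le h2; omega

theorem lE_ext {G G' : BD} (hG : G.Valid) (hG' : G'.Valid) {E} (hE : E ∈ extS (juxt G G')) :
    lE G E ∈ extS G := by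
  rw [mem_extS] at *
  obtain ⟨h0, h1⟩ := hE
  constructor
  · intro p hp
    have hl := hG.ed_le hp
    exact Finset.mem_filter.2 ⟨h0 ((mem_ed_juxt _ _ _).2 (Or.inl hp)), hl.1.2, hl.2.2⟩
  · refine ⟨hG.1, hG.2.1, hG.2.2.1, ?_, ?_, ?_⟩
    · intro p hp
      obtain ⟨hp, a, b⟩ := Finset.mem_filter.1 hp
      obtain ⟨c, d, e⟩ := h1.2.2.2.1 p hp
      refine ⟨up_juxt_le hG' c a, dn_juxt_le hG' d b, ?_⟩
      have e' : (juxt G G').v p.1 < (juxt G G').v p.2 := e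
      rwa [juxt, v_comp_le _ _ _ a, v_comp_le _ _ _ b] at e'
    · intro p hp q hq
      exact h1.2.2.2.2.1 p (Finset.mem_filter.1 hp).1 q (Finset.mem_filter.1 hq).1
    · intro p hp q hq
      exact h1.2.2.2.2.2 p (Finset.mem_filter.1 hp).1 q (Finset.mem_filter.1 hq).1

theorem rE_ext {G G' : BD} (hG' : G'.Valid) {E} (hE : E ∈ extS (juxt G G')) :
    rE G G' E ∈ extS G' := by
  rw [mem_extS] at *
  obtain ⟨h0, h1⟩ := hE
  constructor
  · intro p hp
    exact Finset.mem_filter.2 ⟨hG'.ed_sub hp, h0 ((mem_ed_juxt _ _ _).2 (Or.inr ⟨p, hp, rfl⟩))⟩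
  · refine ⟨hG'.1, hG'.2.1, hG'.2.2.1, ?_, ?_, ?_⟩
    · intro p hp
      obtain ⟨hp, a⟩ := Finset.mem_filter.1 hp
      obtain ⟨hp1, hp2⟩ := Finset.mem_product.1 hp
      obtain ⟨c, d, e⟩ := h1.2.2.2.1 _ a
      have l1 := hG'.up_le hp1
      have l2 := hG'.dn_le hp2
      refine ⟨hp1, hp2, ?_⟩
      have e' : (juxt G G').v (p.1 + G.omega) < (juxt G G').v (p.2 + G.omega) := e
      rw [juxt, v_comp_add _ _ _ l1.1 l1.2, v_comp_add _ _ _ l2.1 l2.2] at e'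
      have e2 : G'.v p.1 < G'.v p.2 := by omega
      exact e2
    · intro p hp q hq e
      have := h1.2.2.2.2.1 _ (Finset.mem_filter.1 hp).2 _ (Finset.mem_filter.1 hq).2
        (by simp only [e])
      simp only [Prod.mk.injEq, Nat.add_right_cancel_iff] at this
      exact Prod.ext this.1 this.2
    · intro p hp q hq e
      have := h1.2.2.2.2.2 _ (Finset.mem_filter.1 hp).2 _ (Finset.mem_filter.1 hq).2
        (by simp only [e])
      simp only [Prod.mk.injEq, Nat.add_right_cancel_iff] at this
      exact Prod.ext this.1 this.2

theorem mE_matching {G G' : BD} (hG : G.Valid) (hG' : G'.Valid) {E} (hE : E ∈ extS (juxt G G')) :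
    Matching (we G (lE G E)) (we G' (rE G G' E)) (mE G G' E) := by
  rw [mem_extS] at hE
  obtain ⟨h0, h1⟩ := hE
  refine ⟨?_, ?_, ?_⟩
  · intro p hp
    obtain ⟨hp, a⟩ := Finset.mem_filter.1 hp
    obtain ⟨hp1, hp2⟩ := Finset.mem_product.1 hp
    have l1 := hG.up_le hp1
    have l2 := hG'.dn_le hp2
    rw [mem_HfUp, mem_HfDn]
    refine ⟨⟨hp1, ?_⟩, hp2, ?_⟩
    · intro q hq e
      obtain ⟨hq, c, d⟩ := Finset.mem_filter.1 hq
      have := h1.2.2.2.2.1 _ hq _ a e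
      rw [this] at d
      simp only at d
      omega
    · intro q hq e
      obtain ⟨hq, c⟩ := Finset.mem_filter.1 hq
      have := h1.2.2.2.2.2 _ c _ a (by simp only [e])
      have := congrArg Prod.fst this
      simp only at this
      have := hG'.up_le (Finset.mem_product.1 hq).1
      omega
  · intro p hp q hq e
    have := h1.2.2.2.2.1 _ (Finset.mem_filter.1 hp).2 _ (Finset.mem_filter.1 hq).2
      (by simp only [e])
    simp only [Prod.mk.injEq, Nat.add_right_cancel_iff] at this
    exact Prod.ext this.1 this.2
  · intro p hp q hq e
    have := h1.2.2.2.2.2 _ (Finset.mem_filter.1 hp).2 _ (Finset.mem_filter.1 hq).2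
      (by simp only [e])
    simp only [Prod.mk.injEq, Nat.add_right_cancel_iff] at this
    exact Prod.ext this.1 this.2

theorem mem_ed_we (G G' : BD) (E1 E2 s) (p : ℕ × ℕ) :
    p ∈ (comp (we G E1) (we G' E2) s).ed ↔
    p ∈ E1 ∨ (∃ q ∈ s, (q.1, q.2 + G.omega) = p) ∨
      ∃ q ∈ E2, (q.1 + G.omega, q.2 + G.omega) = p := mem_ed_comp _ _ _ _

theorem recomb {G G' : BD} (hG : G.Valid) (hG' : G'.Valid) {E} (hE : E ∈ extS (juxt G G')) :
    (comp (we G (lE G E)) (we G' (rE G G' E)) (mE G G' E)).ed = E := by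
  rw [mem_extS] at hE
  obtain ⟨h0, h1⟩ := hE
  ext1 p
  rw [mem_ed_we]
  constructor
  · rintro (h | ⟨q, h, rfl⟩ | ⟨q, h, rfl⟩)
    · exact (Finset.mem_filter.1 h).1
    · exact (Finset.mem_filter.1 h).2
    · exact (Finset.mem_filter.1 h).2
  · intro hp
    obtain ⟨c, d, e⟩ := h1.2.2.2.1 p hp
    have e' : (juxt G G').v p.1 < (juxt G G').v p.2 := e
    obtain ⟨a, b⟩ := p
    rcases (mem_up_comp G G' ∅ _).1 c with hc | ⟨a, hc, rfl⟩ <;>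
    rcases (mem_dn_comp G G' ∅ _).1 d with hd | ⟨b, hd, rfl⟩
    · exact Or.inl (Finset.mem_filter.2 ⟨hp, (hG.up_le hc).2, (hG.dn_le hd).2⟩)
    · exact Or.inr (Or.inl ⟨(a, b), Finset.mem_filter.2 ⟨Finset.mem_product.2 ⟨hc, hd⟩, hp⟩, rfl⟩)
    · have l1 := hG'.up_le hc
      have l2 := hG.dn_le hd
      simp only at e' l2
      rw [juxt, v_comp_add _ _ _ l1.1 l1.2, v_comp_le _ _ _ l2.2] at e'
      have := G.v_le_nv b
      omega
    · exact Or.inr (Or.inr ⟨(a, b), Finset.mem_filter.2 ⟨Finset.mem_product.2 ⟨hc, hd⟩, hp⟩, rfl⟩)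

theorem comp_ext {G G' : BD} (E1) (hE1 : E1 ∈ extS G) (E2) (hE2 : E2 ∈ extS G') (s)
    (hs : Matching (we G E1) (we G' E2) s) :
    (comp (we G E1) (we G' E2) s).ed ∈ extS (juxt G G') := by
  rw [mem_extS] at *
  constructor
  · intro p hp
    rw [mem_ed_we]
    rcases (mem_ed_juxt _ _ _).1 hp with h | ⟨q, h, rfl⟩
    · exact Or.inl (hE1.1 h)
    · exact Or.inr (Or.inr ⟨q, hE2.1 h, rfl⟩)
  · rw [← comp_we]
    exact comp_valid hE1.2 hE2.2 hs

theorem parts {G G' : BD} (E1) (hE1 : E1 ∈ extS G) (E2) (hE2 : E2 ∈ extS G') (s)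
    (hs : Matching (we G E1) (we G' E2) s) :
    lE G (comp (we G E1) (we G' E2) s).ed = E1 ∧ rE G G' (comp (we G E1) (we G' E2) s).ed = E2 ∧
    mE G G' (comp (we G E1) (we G' E2) s).ed = s := by
  rw [mem_extS] at *
  have b1 : ∀ p ∈ E1, (1 ≤ p.1 ∧ p.1 ≤ G.omega) ∧ (1 ≤ p.2 ∧ p.2 ≤ G.omega) :=
    fun p hp => hE1.2.ed_le hp
  have b2 : ∀ p ∈ E2, (1 ≤ p.1 ∧ p.1 ≤ G'.omega) ∧ (1 ≤ p.2 ∧ p.2 ≤ G'.omega) :=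
    fun p hp => hE2.2.ed_le hp
  have m1 : ∀ p ∈ s, p.1 ∈ G.up ∧ p.2 ∈ G'.dn := fun p hp =>
    ⟨((mem_HfUp _ _).1 (hs.1 p hp).1).1, ((mem_HfDn _ _).1 (hs.1 p hp).2).1⟩
  have b3 : ∀ p ∈ s, (1 ≤ p.1 ∧ p.1 ≤ G.omega) ∧ (1 ≤ p.2 ∧ p.2 ≤ G'.omega) :=
    fun p hp => ⟨hE1.2.up_le (m1 p hp).1, hE2.2.dn_le (m1 p hp).2⟩
  refine ⟨?_, ?_, ?_⟩
  · ext1 p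
    unfold lE
    rw [Finset.mem_filter, mem_ed_we]
    constructor
    · rintro ⟨h | ⟨q, h, rfl⟩ | ⟨q, h, rfl⟩, c, d⟩
      · exact h
      · have := b3 q h; simp only at d; omega
      · have := b2 q h; simp only at d; omega
    · intro h
      exact ⟨Or.inl h, (b1 p h).1.2, (b1 p h).2.2⟩
  · ext1 p
    unfold rE
    rw [Finset.mem_filter, mem_ed_we]
    constructor
    · rintro ⟨hp, h | ⟨q, h, e⟩ | ⟨q, h, e⟩⟩
      · have := b1 _ h
        have := hE2.2.up_le (Finset.mem_product.1 hp).1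
        simp only at *; omega
      · have := b3 q h
        have := hE2.2.up_le (Finset.mem_product.1 hp).1
        simp only [Prod.mk.injEq] at *; omega
      · simp only [Prod.mk.injEq, Nat.add_right_cancel_iff] at e
        rw [← Prod.ext e.1 e.2]; exact h
    · intro h
      exact ⟨hE2.2.ed_sub h, Or.inr (Or.inr ⟨p, h, rfl⟩)⟩
  · ext1 p
    unfold mE
    rw [Finset.mem_filter, mem_ed_we]
    constructor
    · rintro ⟨hp, h | ⟨q, h, e⟩ | ⟨q, h, e⟩⟩
      · have := b1 _ h
        have := hE2.2.dn_le (Finset.mem_product.1 hp).2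
        simp only at *; omega
      · simp only [Prod.mk.injEq, Nat.add_right_cancel_iff] at e
        rw [← Prod.ext e.1 e.2]; exact h
      · have := b2 q h
        have := hE1.2.up_le (Finset.mem_product.1 hp).1
        have hh : (we G E1).omega = G.omega := rfl
        simp only [Prod.mk.injEq] at *; omega
    · intro h
      exact ⟨Finset.mem_product.2 (m1 p h), Or.inr (Or.inl ⟨p, h, rfl⟩)⟩

end BD

theorem U_juxt {G G' : BD} (hG : G.Valid) (hG' : G'.Valid) :
    Ufun (BD.juxt G G') = starB (Ufun G) (Ufun G') := by
  have e1 : starB (Ufun G) (Ufun G') = ∑ p ∈ BD.extS G ×ˢ BD.extS G',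
      ∑ s ∈ BD.matchings (BD.we G p.1) (BD.we G' p.2),
        mkB (BD.comp (BD.we G p.1) (BD.we G' p.2) s) := by
    unfold Ufun
    rw [map_sum, Finset.sum_product_right]
    refine Finset.sum_congr rfl fun E2 h2 => ?_
    rw [map_sum starB, LinearMap.sum_apply]
    refine Finset.sum_congr rfl fun E1 h1 => ?_
    rw [BD.mem_extS] at h1 h2
    rw [starB_mkB h1.2 h2.2]
  rw [e1, Finset.sum_sigma', Ufun]
  refine Finset.sum_bij' (fun E _ => ⟨(BD.lE G E, BD.rE G G' E), BD.mE G G' E⟩)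
    (fun x _ => (BD.comp (BD.we G x.1.1) (BD.we G' x.1.2) x.2).ed) ?_ ?_ ?_ ?_ ?_
  · intro E hE
    simp only [Finset.mem_sigma, Finset.mem_product, mem_matchings]
    exact ⟨⟨BD.lE_ext hG hG' hE, BD.rE_ext hG' hE⟩, BD.mE_matching hG hG' hE⟩
  · rintro ⟨⟨E1, E2⟩, s⟩ h
    simp only [Finset.mem_sigma, Finset.mem_product, mem_matchings] at h
    exact BD.comp_ext E1 h.1.1 E2 h.1.2 s h.2
  · intro E hE
    exact BD.recomb hG hG' hE
  · rintro ⟨⟨E1, E2⟩, s⟩ h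
    simp only [Finset.mem_sigma, Finset.mem_product, mem_matchings] at h
    obtain ⟨a, b, c⟩ := BD.parts E1 h.1.1 E2 h.1.2 s h.2
    simp only [a, b, c]
  · intro E hE
    simp only
    rw [BD.comp_we, BD.recomb hG hG' hE]

/-- basis -/
noncomputable def bB : Module.Basis BDiagram ℂ BSpace := Finsupp.basisSingleOne

theorem bB_apply (A : BDiagram) : bB A = mkB A.1 := by
  rw [mkB_valid A.2]; simp [bB]

theorem UL_bij : Function.Bijective UL := by
  refine tri_bij bB (fun A => ((A.1.up ×ˢ A.1.dn) \ A.1.ed).card) UL fun A => ?_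
  rw [bB_apply, UL_mkB A.2, Ufun]
  have hmem : A.1.ed ∈ BD.extS A.1 := by
    rw [BD.mem_extS]; exact ⟨subset_rfl, A.2⟩
  rw [← Finset.add_sum_erase _ _ hmem]
  have : BD.we A.1 A.1.ed = A.1 := rfl
  rw [this, add_sub_cancel_left]
  refine Submodule.sum_mem _ fun E hE => ?_
  obtain ⟨h1, h2⟩ := Finset.mem_erase.1 hE
  rw [BD.mem_extS] at h2
  refine Submodule.subset_span ⟨⟨_, h2.2⟩, (bB_apply ⟨_, h2.2⟩).symm, ?_⟩
  refine Finset.card_lt_card ?_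
  change (A.1.up ×ˢ A.1.dn) \ E ⊂ _
  have hss : A.1.ed ⊂ E := h2.1.ssubset_of_ne (Ne.symm h1)
  refine ⟨Finset.sdiff_subset_sdiff subset_rfl h2.1, fun hc => ?_⟩
  obtain ⟨p, hp, hp'⟩ := Finset.exists_of_ssubset hss
  have := hc (Finset.mem_sdiff.2 ⟨h2.2.ed_sub hp, hp'⟩)
  exact (Finset.mem_sdiff.1 this).2 hp

theorem U_eps : Ufun BD.eps = mkB BD.eps := by
  have h : BD.extS BD.eps = {∅} := by
    ext E
    rw [BD.mem_extS, Finset.mem_singleton]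
    constructor
    · intro h
      have := h.2.ed_sub
      simpa [BD.we, BD.eps] using this
    · rintro rfl; exact ⟨by simp [BD.eps], BD.eps_valid⟩
  unfold Ufun
  rw [h, Finset.sum_singleton]; rfl

namespace BD

/-- restriction of an edge set -/
def push (G : BD) (I : Finset ℕ) (E : Finset (ℕ × ℕ)) : Finset (ℕ × ℕ) :=
  (E.filter (fun p => G.v p.1 ∈ I ∧ G.v p.2 ∈ I)).image (fun p => (G.phi I p.1, G.phi I p.2))

/-- transport of an edge set on the sub-diagram to the whole diagram -/
def pull (G : BD) (I : Finset ℕ) (E : Finset (ℕ × ℕ)) : Finset (ℕ × ℕ) :=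
  (G.up ×ˢ G.dn).filter
    (fun p => (p.1 ∈ G.HI I ∧ p.2 ∈ G.HI I) ∧ (G.phi I p.1, G.phi I p.2) ∈ E)

theorem sub_we (G : BD) (I E) : (we G E).sub I = we (G.sub I) (push G I E) := rfl

theorem mem_push (G : BD) (I E) (q : ℕ × ℕ) : q ∈ push G I E ↔
    ∃ p ∈ E, (G.v p.1 ∈ I ∧ G.v p.2 ∈ I) ∧ (G.phi I p.1, G.phi I p.2) = q := by
  simp only [push, Finset.mem_image, Finset.mem_filter, and_assoc]

theorem mem_pull (G : BD) (I E) (p : ℕ × ℕ) : p ∈ pull G I E ↔ (p.1 ∈ G.up ∧ p.2 ∈ G.dn) ∧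
    (p.1 ∈ G.HI I ∧ p.2 ∈ G.HI I) ∧ (G.phi I p.1, G.phi I p.2) ∈ E := by
  simp only [pull, Finset.mem_filter, Finset.mem_product]

theorem push_ext {G : BD} {I : Finset ℕ} (hI : I ⊆ Finset.Icc 1 G.nv) {E}
    (hE : E ∈ extS G) : push G I E ∈ extS (G.sub I) := by
  rw [mem_extS] at *
  refine ⟨?_, ?_⟩
  · exact Finset.image_subset_image (Finset.filter_subset_filter _ hE.1)
  · rw [← sub_we]; exact sub_valid hE.2 I hI

theorem pull_push {G : BD} {I : Finset ℕ} (hI : I ⊆ Finset.Icc 1 G.nv) {E}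
    (hE : E ∈ extS G) (p : ℕ × ℕ) :
    p ∈ pull G I (push G I E) ↔ p ∈ E ∧ G.v p.1 ∈ I ∧ G.v p.2 ∈ I := by
  rw [mem_extS] at hE
  have h := sub_rel G I hI
  have hH : ∀ q ∈ E, (q.1 ∈ G.HI I ↔ G.v q.1 ∈ I) ∧ (q.2 ∈ G.HI I ↔ G.v q.2 ∈ I) :=
    fun q hq => hE.2.ed_HI hq I
  rw [mem_pull]
  constructor
  · rintro ⟨_, ⟨h1, h2⟩, h3⟩
    obtain ⟨q, hq, hv, e⟩ := (mem_push _ _ _ _).1 h3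
    simp only [Prod.mk.injEq] at e
    have e1 := h.fmono.injOn (Finset.mem_coe.2 ((hH q hq).1.2 hv.1)) (Finset.mem_coe.2 h1) e.1
    have e2 := h.fmono.injOn (Finset.mem_coe.2 ((hH q hq).2.2 hv.2)) (Finset.mem_coe.2 h2) e.2
    have : q = p := Prod.ext e1 e2
    subst this
    exact ⟨hq, hv⟩
  · rintro ⟨hp, hv⟩
    refine ⟨Finset.mem_product.1 (hE.2.ed_sub hp), ⟨(hH p hp).1.2 hv.1, (hH p hp).2.2 hv.2⟩, ?_⟩
    exact (mem_push _ _ _ _).2 ⟨p, hp, hv, rfl⟩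

theorem pull_union {G : BD} {I : Finset ℕ} (hI : I ⊆ Finset.Icc 1 G.nv) {E}
    (hE : E ∈ extS G) (hi : (we G E).Isolated I) :
    pull G I (push G I E) ∪
      pull G (Finset.Icc 1 G.nv \ I) (push G (Finset.Icc 1 G.nv \ I) E) = E := by
  ext1 p
  rw [Finset.mem_union, pull_push hI hE, pull_push Finset.sdiff_subset hE]
  constructor
  · rintro (h | h) <;> exact h.1
  · intro hp
    have h1 : G.v p.1 ∈ I ↔ G.v p.2 ∈ I := hi p hp
    have hm := ((mem_extS _ _).1 hE).2.ed_mem hp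
    have h2 := G.v_mem hm.1
    have h3 := G.v_mem hm.2
    by_cases h : G.v p.1 ∈ I
    · exact Or.inl ⟨hp, h, h1.1 h⟩
    · exact Or.inr ⟨hp, Finset.mem_sdiff.2 ⟨h2, h⟩, Finset.mem_sdiff.2 ⟨h3, fun c => h (h1.2 c)⟩⟩

theorem push_pull {G : BD} {I J : Finset ℕ} (hI : I ⊆ Finset.Icc 1 G.nv)
    (hd : ∀ x ∈ I, x ∉ J) {E1 E2} (hE : E1 ∈ extS (G.sub I)) {E}
    (he : ∀ p, p ∈ E ↔ p ∈ pull G I E1 ∨ p ∈ pull G J E2) :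
    push G I E = E1 := by
  have h := sub_rel G I hI
  ext1 q
  rw [mem_push]
  constructor
  · rintro ⟨p, hp, hv, rfl⟩
    rcases (he p).1 hp with hp | hp
    · exact ((mem_pull _ _ _ _).1 hp).2.2
    · have := ((mem_pull _ _ _ _).1 hp).2.1.1
      exact absurd ((mem_HI _ _ _).1 this).2 (hd _ hv.1)
  · intro hq
    have hq' := Finset.mem_product.1 (((mem_extS _ _).1 hE).2.ed_sub hq)
    have a1 : q.1 ∈ (G.sub I).up := hq'.1
    have a2 : q.2 ∈ (G.sub I).dn := hq'.2
    rw [h.hup, Finset.mem_image] at a1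
    rw [h.hdn, Finset.mem_image] at a2
    obtain ⟨a, ha, e1⟩ := a1
    obtain ⟨b, hb, e2⟩ := a2
    rw [Finset.mem_inter] at ha hb
    have e : (G.phi I a, G.phi I b) = q := Prod.ext e1 e2
    refine ⟨(a, b), (he _).2 (Or.inl ((mem_pull _ _ _ _).2
      ⟨⟨ha.1, hb.1⟩, ⟨ha.2, hb.2⟩, ?_⟩)), ⟨((mem_HI _ _ _).1 ha.2).2, ((mem_HI _ _ _).1 hb.2).2⟩, e⟩
    simp only [e]; exact hq

theorem pull_facts {G : BD} {I : Finset ℕ} (hI : I ⊆ Finset.Icc 1 G.nv) {E}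
    (hE : E ∈ extS (G.sub I)) :
    (∀ p ∈ pull G I E, p.1 ∈ G.up ∧ p.2 ∈ G.dn ∧ G.v p.1 < G.v p.2) ∧
    (∀ p ∈ pull G I E, ∀ q ∈ pull G I E, p.1 = q.1 → p = q) ∧
    (∀ p ∈ pull G I E, ∀ q ∈ pull G I E, p.2 = q.2 → p = q) := by
  rw [mem_extS] at hE
  have h := sub_rel G I hI
  refine ⟨?_, ?_, ?_⟩
  · intro p hp
    obtain ⟨h1, h2, h3⟩ := (mem_pull _ _ _ _).1 hp
    refine ⟨h1.1, h1.2, ?_⟩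
    have : (G.sub I).v (G.phi I p.1) < (G.sub I).v (G.phi I p.2) := (hE.2.2.2.2.1 _ h3).2.2
    rw [h.hv _ h2.1, h.hv _ h2.2] at this
    exact (h.pmono.lt_iff_lt (Finset.mem_coe.2 ((mem_HI _ _ _).1 h2.1).2)
      (Finset.mem_coe.2 ((mem_HI _ _ _).1 h2.2).2)).1 this
  · intro p hp q hq e
    obtain ⟨-, h2, h3⟩ := (mem_pull _ _ _ _).1 hp
    obtain ⟨-, h2', h3'⟩ := (mem_pull _ _ _ _).1 hq
    have := hE.2.2.2.2.2.1 _ h3 _ h3' (by simp only [e])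
    simp only [Prod.mk.injEq] at this
    exact Prod.ext e (h.fmono.injOn (Finset.mem_coe.2 h2.2) (Finset.mem_coe.2 h2'.2) this.2)
  · intro p hp q hq e
    obtain ⟨-, h2, h3⟩ := (mem_pull _ _ _ _).1 hp
    obtain ⟨-, h2', h3'⟩ := (mem_pull _ _ _ _).1 hq
    have := hE.2.2.2.2.2.2 _ h3 _ h3' (by simp only [e])
    simp only [Prod.mk.injEq] at this
    exact Prod.ext (h.fmono.injOn (Finset.mem_coe.2 h2.1) (Finset.mem_coe.2 h2'.1) this.1) e

theorem union_ext {G : BD} (hG : G.Valid) {I : Finset ℕ} (hI : I ∈ isoS G) {E1 E2}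
    (hE1 : E1 ∈ extS (G.sub I)) (hE2 : E2 ∈ extS (G.sub (Finset.Icc 1 G.nv \ I))) :
    pull G I E1 ∪ pull G (Finset.Icc 1 G.nv \ I) E2 ∈ extS G ∧
    (we G (pull G I E1 ∪ pull G (Finset.Icc 1 G.nv \ I) E2)).Isolated I := by
  rw [mem_isoS] at hI
  obtain ⟨a1, b1, c1⟩ := pull_facts hI.1 hE1
  obtain ⟨a2, b2, c2⟩ := pull_facts Finset.sdiff_subset hE2
  set J := Finset.Icc 1 G.nv \ I with hJ
  have i1 : ∀ p ∈ pull G I E1, G.v p.1 ∈ I ∧ G.v p.2 ∈ I := fun p hp => by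
    have := ((mem_pull _ _ _ _).1 hp).2.1
    exact ⟨((mem_HI _ _ _).1 this.1).2, ((mem_HI _ _ _).1 this.2).2⟩
  have i2 : ∀ p ∈ pull G J E2, G.v p.1 ∉ I ∧ G.v p.2 ∉ I := fun p hp => by
    have := ((mem_pull _ _ _ _).1 hp).2.1
    exact ⟨(Finset.mem_sdiff.1 ((mem_HI _ _ _).1 this.1).2).2,
      (Finset.mem_sdiff.1 ((mem_HI _ _ _).1 this.2).2).2⟩
  have hE1' := ((mem_extS _ _).1 hE1).1
  have hE2' := ((mem_extS _ _).1 hE2).1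
  refine ⟨(mem_extS _ _).2 ⟨?_, hG.1, hG.2.1, hG.2.2.1, ?_, ?_, ?_⟩, ?_⟩
  · intro p hp
    have hiso := hI.2 p hp
    have hm := hG.ed_mem hp
    have hud := Finset.mem_product.1 (hG.ed_sub hp)
    rw [Finset.mem_union]
    by_cases hc : G.v p.1 ∈ I
    · left
      have hh := hG.ed_HI hp I
      refine (mem_pull _ _ _ _).2 ⟨hud, ⟨hh.1.2 hc, hh.2.2 (hiso.1 hc)⟩, hE1' ?_⟩
      exact (mem_push G I G.ed _).2 ⟨p, hp, ⟨hc, hiso.1 hc⟩, rfl⟩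
    · right
      have hh := hG.ed_HI hp J
      have k1 : G.v p.1 ∈ J := Finset.mem_sdiff.2 ⟨G.v_mem hm.1, hc⟩
      have k2 : G.v p.2 ∈ J := Finset.mem_sdiff.2 ⟨G.v_mem hm.2, fun c => hc (hiso.2 c)⟩
      refine (mem_pull _ _ _ _).2 ⟨hud, ⟨hh.1.2 k1, hh.2.2 k2⟩, hE2' ?_⟩
      exact (mem_push G J G.ed _).2 ⟨p, hp, ⟨k1, k2⟩, rfl⟩
  · intro p hp
    rcases Finset.mem_union.1 hp with h | h
    · exact a1 p h
    · exact a2 p h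
  · intro p hp q hq e
    rcases Finset.mem_union.1 hp with h | h <;> rcases Finset.mem_union.1 hq with h' | h'
    · exact b1 p h q h' e
    · exact absurd (e ▸ (i1 p h).1) (i2 q h').1
    · exact absurd (e ▸ (i1 q h').1) (i2 p h).1
    · exact b2 p h q h' e
  · intro p hp q hq e
    rcases Finset.mem_union.1 hp with h | h <;> rcases Finset.mem_union.1 hq with h' | h'
    · exact c1 p h q h' e
    · exact absurd (e ▸ (i1 p h).2) (i2 q h').2
    · exact absurd (e ▸ (i1 q h').2) (i2 p h).2
    · exact c2 p h q h' e
  · intro p hp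
    change G.v p.1 ∈ I ↔ G.v p.2 ∈ I
    rcases Finset.mem_union.1 hp with h | h
    · have := i1 p h; tauto
    · have := i2 p h; tauto

end BD

theorem deltaL_mkB {G : BD} (h : G.Valid) : deltaL (mkB G) = ∑ I ∈ isoS G,
    mkB (G.sub I) ⊗ₜ[ℂ] mkB (G.sub (Finset.Icc 1 G.nv \ I)) := by
  rw [deltaL, liftB_mkB _ h]; rfl

open scoped Classical in
theorem deltaL_U {G : BD} (hG : G.Valid) :
    deltaL (Ufun G) = TensorProduct.map UL UL (deltaL (mkB G)) := by
  rw [deltaL_mkB hG, Ufun, map_sum, map_sum]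
  have l1 : ∀ E ∈ BD.extS G, deltaL (mkB (BD.we G E)) =
      ∑ I ∈ isoS (BD.we G E), mkB (BD.we (G.sub I) (BD.push G I E)) ⊗ₜ[ℂ]
        mkB (BD.we (G.sub (Finset.Icc 1 G.nv \ I)) (BD.push G (Finset.Icc 1 G.nv \ I) E)) :=
    fun E hE => deltaL_mkB ((BD.mem_extS _ _).1 hE).2
  rw [Finset.sum_congr rfl l1]
  rw [Finset.sum_comm' (t' := isoS G)
    (s' := fun I => (BD.extS G).filter fun E => (BD.we G E).Isolated I)]
  · refine Finset.sum_congr rfl fun I hI => ?_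
    have hI' := (mem_isoS _ _).1 hI
    have hd : ∀ x ∈ I, x ∉ Finset.Icc 1 G.nv \ I := fun x hx hc => (Finset.mem_sdiff.1 hc).2 hx
    have hd' : ∀ x ∈ Finset.Icc 1 G.nv \ I, x ∉ I := fun x hx => (Finset.mem_sdiff.1 hx).2
    rw [TensorProduct.map_tmul, UL_mkB (BD.sub_valid hG I hI'.1),
      UL_mkB (BD.sub_valid hG _ Finset.sdiff_subset), Ufun, Ufun, TensorProduct.sum_tmul]
    simp_rw [TensorProduct.tmul_sum]
    rw [← Finset.sum_product']
    refine Finset.sum_bij' (fun E _ => (BD.push G I E, BD.push G (Finset.Icc 1 G.nv \ I) E))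
      (fun x _ => BD.pull G I x.1 ∪ BD.pull G (Finset.Icc 1 G.nv \ I) x.2) ?_ ?_ ?_ ?_ ?_
    · intro E hE
      have hE := (Finset.mem_filter.1 hE).1
      exact Finset.mem_product.2 ⟨BD.push_ext hI'.1 hE, BD.push_ext Finset.sdiff_subset hE⟩
    · intro x hx
      have hx := Finset.mem_product.1 hx
      exact Finset.mem_filter.2 (BD.union_ext hG hI hx.1 hx.2)
    · intro E hE
      have hE := Finset.mem_filter.1 hE
      exact BD.pull_union hI'.1 hE.1 hE.2
    · intro x hx
      have hx := Finset.mem_product.1 hx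
      refine Prod.ext ?_ ?_
      · exact BD.push_pull hI'.1 hd hx.1 (fun p => Finset.mem_union)
      · exact BD.push_pull Finset.sdiff_subset hd' hx.2
          (fun p => Finset.mem_union.trans or_comm)
    · intro E hE; rfl
  · intro E I
    rw [Finset.mem_filter, mem_isoS, mem_isoS]
    constructor
    · rintro ⟨h1, h2, h3⟩
      exact ⟨⟨h1, h3⟩, h2, fun p hp => h3 p (((BD.mem_extS _ _).1 h1).1 hp)⟩
    · rintro ⟨⟨h1, h3⟩, h2, -⟩
      exact ⟨h1, h2, h3⟩

theorem deltaL_UL (x : BSpace) : deltaL (UL x) = TensorProduct.map UL UL (deltaL x) := by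
  have : deltaL ∘ₗ UL = TensorProduct.map UL UL ∘ₗ deltaL := BSpace_ext fun G hG => by
    simp only [LinearMap.comp_apply]
    rw [UL_mkB hG, deltaL_U hG]
  exact LinearMap.congr_fun this x

theorem UL_mul (x y : AA) : UL (LA (x * y)) = starB (UL (LA x)) (UL (LA y)) := by
  have : (LinearMap.mul ℂ AA).compr₂ (UL ∘ₗ LA.toLinearMap) =
      starB.compl₁₂ (UL ∘ₗ LA.toLinearMap) (UL ∘ₗ LA.toLinearMap) := by
    refine AA_ext fun G hG => AA_ext fun G' hG' => ?_
    simp only [LinearMap.compr₂_apply, LinearMap.mul_apply', LinearMap.compl₁₂_apply,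
      LinearMap.comp_apply, LinearEquiv.coe_coe]
    rw [← mA_juxt hG hG', LA_mA, LA_mA, LA_mA, UL_mkB (BD.juxt_valid hG hG'), UL_mkB hG, UL_mkB hG',
      U_juxt hG hG']
  exact LinearMap.congr_fun (LinearMap.congr_fun this x) y

/-- the final isomorphism -/
noncomputable def RR : FreeAlgebra ℂ GSet ≃ₗ[ℂ] BSpace :=
  LinearEquiv.ofBijective (UL ∘ₗ LA.toLinearMap ∘ₗ Phi.toLinearMap)
    (UL_bij.comp (LA.bijective.comp Phi_bij))

theorem RR_apply (x) : RR x = UL (LA (Phi x)) := rfl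

theorem RR_mul (x y) : RR (x * y) = starB (RR x) (RR y) := by
  rw [RR_apply, RR_apply, RR_apply, map_mul, UL_mul]

theorem RR_one : RR 1 = unitB := by
  rw [RR_apply, map_one, ← mA_eps, LA_mA, UL_mkB BD.eps_valid, U_eps, mkB_valid BD.eps_valid]
  rfl

theorem deltaL_RR (x) : deltaL (RR x) =
    TensorProduct.congr RR RR (FLA.del GSet x) := by
  rw [RR_apply, deltaL_UL, deltaL_LA, Phi_del]
  generalize FLA.del GSet x = z
  induction z using TensorProduct.induction_on with
  | zero => simp
  | tmul a b => simp [RR_apply]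
  | add a b ha hb => simp only [map_add, ha, hb]

theorem RR_prim (x) : RR x ∈ PrimB ↔ FLA.del GSet x = x ⊗ₜ 1 + 1 ⊗ₜ x := by
  rw [PrimB, Set.mem_ofPred_eq, deltaL_RR, ← RR_one]
  rw [← TensorProduct.congr_tmul, ← TensorProduct.congr_tmul, ← map_add]
  exact (TensorProduct.congr RR RR).injective.eq_iff

attribute [local instance 100] LieRing.ofAssociativeRing

/-- the primitive elements of ℬ form a Lie algebra for the bracket
`[x,y] = x ⋆ y − y ⋆ x`, isomorphic to the free Lie algebra on the nonempty
indivisible B-diagrams. -/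
theorem primB_free_lie :
    (∀ x ∈ PrimB, ∀ y ∈ PrimB, starB x y - starB y x ∈ PrimB) ∧
    (∃ f : FreeLieAlgebra ℂ GSet → BSpace,
      IsLinearMap ℂ f ∧ Function.Injective f ∧ Set.range f = PrimB ∧
      ∀ x y : FreeLieAlgebra ℂ GSet, f ⁅x, y⁆ = starB (f x) (f y) - starB (f y) (f x)) := by
  have h2 : ∃ f : FreeLieAlgebra ℂ GSet → BSpace,
      IsLinearMap ℂ f ∧ Function.Injective f ∧ Set.range f = PrimB ∧
      ∀ x y : FreeLieAlgebra ℂ GSet, f ⁅x, y⁆ = starB (f x) (f y) - starB (f y) (f x) := by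
    refine ⟨fun l => RR (FLA.iota GSet l), ⟨fun a b => ?_, fun c a => ?_⟩, ?_, ?_, ?_⟩
    · rw [map_add, map_add]
    · rw [map_smul, map_smul]
    · exact RR.injective.comp (FLA.iota_injective GSet)
    · ext x
      constructor
      · rintro ⟨l, rfl⟩
        exact (RR_prim _).2 (FLA.del_iota_mem GSet l)
      · intro hx
        obtain ⟨w, rfl⟩ := RR.surjective x
        obtain ⟨l, rfl⟩ := FLA.prim_range GSet w ((RR_prim w).1 hx)
        exact ⟨l, rfl⟩
    · intro x y
      simp only
      rw [LieHom.map_lie, LieRing.of_associative_ring_bracket, map_sub, RR_mul, RR_mul]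
  refine ⟨?_, h2⟩
  obtain ⟨f, -, -, hr, hb⟩ := h2
  rw [← hr]
  rintro _ ⟨a, rfl⟩ _ ⟨b, rfl⟩
  exact ⟨⁅a, b⁆, hb a b⟩
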